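/- Let C be a 2-reduced cocommutative dg coalgebra over ℚ. Every t-equivalence of left dg C-comodules is a quasi-isomorphism. Conversely, every quasi-isomorphism between bounded below C-comodules is a t-equivalence. -/

import Mathlib

open scoped TensorProduct

noncomputable section

/-- A homologically graded differential graded `ℚ`-vector space (chain complex of
`ℚ`-vector spaces presented as a graded module with a degree `-1` square-zero differential). -/
structure DGVect : Type 1 where
  carrier : Type
  [isAddCommGroup : AddCommGroup carrier]
  [isModule : Module ℚ carrier]
  grading : ℤ → Submodule ℚ carrier
  [isDecomp : DirectSum.Decomposition grading]
  d : carrier →ₗ[ℚ] carrier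
  d_mem : ∀ (n : ℤ), ∀ x ∈ grading n, d x ∈ grading (n - 1)
  d_sq : d.comp d = 0

attribute [instance] DGVect.isAddCommGroup DGVect.isModule DGVect.isDecomp

/-- The operator acting on the degree `n` graded component by `(-1)^(k*n)`. -/
def signOpOf {V : Type} [AddCommGroup V] [Module ℚ V] (g : ℤ → Submodule ℚ V)
    [DirectSum.Decomposition g] (k : ℤ) : V →ₗ[ℚ] V :=
  (DirectSum.toModule ℚ ℤ V fun n => ((-1 : ℚ) ^ (k * n)) • (g n).subtype).comp
    (DirectSum.decomposeLinearEquiv g).toLinearMap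

/-- The Koszul parity operator, acting by `(-1)^n` in degree `n`. -/
def parityOf {V : Type} [AddCommGroup V] [Module ℚ V] (g : ℤ → Submodule ℚ V)
    [DirectSum.Decomposition g] : V →ₗ[ℚ] V := signOpOf g 1

def DGVect.parity (V : DGVect) : V.carrier →ₗ[ℚ] V.carrier := parityOf V.grading

/-- A graded object is bounded below if it vanishes in all sufficiently negative degrees. -/
def DGVect.BoundedBelow (V : DGVect) : Prop := ∃ b : ℤ, ∀ n : ℤ, n < b → V.grading n = ⊥

/-- The Koszul signed braiding `v ⊗ w ↦ (-1)^{|v||w|} w ⊗ v` of graded vector spaces. -/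
def kSwapOf {V W : Type} [AddCommGroup V] [Module ℚ V] [AddCommGroup W] [Module ℚ W]
    (gV : ℤ → Submodule ℚ V) (gW : ℤ → Submodule ℚ W)
    [DirectSum.Decomposition gV] [DirectSum.Decomposition gW] :
    V ⊗[ℚ] W →ₗ[ℚ] W ⊗[ℚ] V :=
  TensorProduct.lift
    ((DirectSum.toModule ℚ ℤ (W →ₗ[ℚ] W ⊗[ℚ] V) (fun i =>
        (((DirectSum.toModule ℚ ℤ (V →ₗ[ℚ] W ⊗[ℚ] V) (fun j =>
              ((-1 : ℚ) ^ (i * j)) • ((TensorProduct.mk ℚ W V).comp (gW j).subtype))).comp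
            (DirectSum.decomposeLinearEquiv gW).toLinearMap).flip).comp
          (gV i).subtype)).comp
      (DirectSum.decomposeLinearEquiv gV).toLinearMap)

/-- The degree `n` part of the tensor product grading:
the span of the homogeneous tensors of total degree `n`. -/
def tensorGrading {V W : Type} [AddCommGroup V] [Module ℚ V] [AddCommGroup W] [Module ℚ W]
    (gV : ℤ → Submodule ℚ V) (gW : ℤ → Submodule ℚ W) (n : ℤ) : Submodule ℚ (V ⊗[ℚ] W) :=
  ⨆ p : {p : ℤ × ℤ // p.1 + p.2 = n},
    LinearMap.range (TensorProduct.map (gV p.1.1).subtype (gW p.1.2).subtype)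

/-- `f` is a quasi-isomorphism from the complex `(V, dV)` to the complex `(W, dW)`:
it induces a bijection on homology (`ker d / im d`). -/
def IsQuasiIso {V W : Type} [AddCommGroup V] [Module ℚ V] [AddCommGroup W] [Module ℚ W]
    (dV : V →ₗ[ℚ] V) (dW : W →ₗ[ℚ] W) (f : V →ₗ[ℚ] W) : Prop :=
  (∀ x : V, dV x = 0 → (∃ y, f x = dW y) → ∃ z, x = dV z) ∧
  (∀ w : W, dW w = 0 → ∃ x, dV x = 0 ∧ ∃ y, w - f x = dW y)

/-- A differential graded algebra over `ℚ`. -/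
structure DGAlgebra extends DGVect where
  mul : carrier →ₗ[ℚ] carrier →ₗ[ℚ] carrier
  one : carrier
  one_mem : one ∈ grading 0
  mul_mem : ∀ (i j : ℤ) (x y : carrier), x ∈ grading i → y ∈ grading j →
    mul x y ∈ grading (i + j)
  mul_assoc' : ∀ x y z : carrier, mul (mul x y) z = mul x (mul y z)
  one_mul' : ∀ x : carrier, mul one x = x
  mul_one' : ∀ x : carrier, mul x one = x
  leibniz : ∀ (i : ℤ) (x y : carrier), x ∈ grading i →
    d (mul x y) = mul (d x) y + ((-1 : ℚ) ^ i) • mul x (d y)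

/-- The multiplication of a dg algebra as a map out of the tensor product. -/
def DGAlgebra.mulMap (A : DGAlgebra) : A.carrier ⊗[ℚ] A.carrier →ₗ[ℚ] A.carrier :=
  TensorProduct.lift A.mul

/-- A dg algebra is connective if it is concentrated in non-negative degrees. -/
def DGAlgebra.Connective (A : DGAlgebra) : Prop := ∀ n : ℤ, n < 0 → A.grading n = ⊥

/-- A (coassociative counital) differential graded coalgebra over `ℚ`,
non-negatively graded. -/
structure DGCoalgebra extends DGVect where
  comul : carrier →ₗ[ℚ] carrier ⊗[ℚ] carrier
  counit : carrier →ₗ[ℚ] ℚ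
  nonneg : ∀ n : ℤ, n < 0 → grading n = ⊥
  comul_mem : ∀ (n : ℤ), ∀ x ∈ grading n, comul x ∈ tensorGrading grading grading n
  counit_zero : ∀ (n : ℤ), n ≠ 0 → ∀ x ∈ grading n, counit x = 0
  coassoc : (TensorProduct.assoc ℚ carrier carrier carrier).toLinearMap.comp
      ((TensorProduct.map comul LinearMap.id).comp comul)
      = (TensorProduct.map LinearMap.id comul).comp comul
  counit_comul_left : (TensorProduct.lid ℚ carrier).toLinearMap.comp
      ((TensorProduct.map counit LinearMap.id).comp comul) = LinearMap.id
  counit_comul_right : (TensorProduct.rid ℚ carrier).toLinearMap.comp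
      ((TensorProduct.map LinearMap.id counit).comp comul) = LinearMap.id
  comul_chain : comul.comp d
      = (TensorProduct.map d LinearMap.id + TensorProduct.map (parityOf grading) d).comp comul
  counit_chain : counit.comp d = 0

/-- Cocommutativity: the comultiplication is invariant under the Koszul signed twist. -/
def DGCoalgebra.Cocomm (C : DGCoalgebra) : Prop :=
  (kSwapOf C.grading C.grading).comp C.comul = C.comul

/-- A coaugmented dg coalgebra: a dg coalgebra with a coaugmentation `η : ℚ → C`,
recorded by the grouplike element `one = η 1` in degree `0`. -/
structure CoaugDGCoalgebra extends DGCoalgebra where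
  one : carrier
  one_mem : one ∈ grading 0
  counit_one : counit one = 1
  comul_one : comul one = one ⊗ₜ[ℚ] one

/-- A coaugmented dg coalgebra is 2-reduced if `C₀ = ℚ` (spanned by the coaugmentation)
and `C₁ = 0`. -/
def CoaugDGCoalgebra.TwoReduced (C : CoaugDGCoalgebra) : Prop :=
  C.grading 0 = Submodule.span ℚ {C.one} ∧ C.grading 1 = ⊥

/-- A twisting chain `τ : C ⇝ A`: a degree `-1` linear map satisfying
`d(τc) = -τ(dc) - (-1)^{|c₍₀₎|} τ(c₍₀₎)·τ(c₍₁₎)`. -/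
structure TwistingChain (C : DGCoalgebra) (A : DGAlgebra) where
  toFun : C.carrier →ₗ[ℚ] A.carrier
  mem : ∀ (n : ℤ), ∀ x ∈ C.grading n, toFun x ∈ A.grading (n - 1)
  twist : A.d.comp toFun + toFun.comp C.d
      + A.mulMap.comp ((TensorProduct.map (toFun.comp (parityOf C.grading)) toFun).comp C.comul)
      = 0

/-- A left dg module over a dg algebra. -/
structure DGModule (A : DGAlgebra) extends DGVect where
  smul : A.carrier →ₗ[ℚ] carrier →ₗ[ℚ] carrier
  smul_mem : ∀ (i j : ℤ) (a : A.carrier) (x : carrier), a ∈ A.grading i → x ∈ grading j →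
    smul a x ∈ grading (i + j)
  one_smul' : ∀ x : carrier, smul A.one x = x
  mul_smul' : ∀ (a b : A.carrier) (x : carrier), smul (A.mul a b) x = smul a (smul b x)
  leibniz : ∀ (i : ℤ) (a : A.carrier) (x : carrier), a ∈ A.grading i →
    d (smul a x) = smul (A.d a) x + ((-1 : ℚ) ^ i) • smul a (d x)

/-- The action of a dg module as a map out of the tensor product. -/
def DGModule.actionMap {A : DGAlgebra} (M : DGModule A) :
    A.carrier ⊗[ℚ] M.carrier →ₗ[ℚ] M.carrier := TensorProduct.lift M.smul

/-- A left dg comodule over a dg coalgebra. -/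
structure DGComodule (C : DGCoalgebra) extends DGVect where
  coact : carrier →ₗ[ℚ] C.carrier ⊗[ℚ] carrier
  coact_mem : ∀ (n : ℤ), ∀ x ∈ grading n, coact x ∈ tensorGrading C.grading grading n
  coassoc : (TensorProduct.assoc ℚ C.carrier C.carrier carrier).toLinearMap.comp
      ((TensorProduct.map C.comul LinearMap.id).comp coact)
      = (TensorProduct.map LinearMap.id coact).comp coact
  counit_coact : (TensorProduct.lid ℚ carrier).toLinearMap.comp
      ((TensorProduct.map C.counit LinearMap.id).comp coact) = LinearMap.id
  coact_chain : coact.comp d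
      = (TensorProduct.map C.d LinearMap.id + TensorProduct.map (parityOf C.grading) d).comp coact

/-- Morphisms of dg modules: degree `0` graded chain maps commuting with the action. -/
def IsModuleHom (A : DGAlgebra) (M M' : DGModule A)
    (g : M.carrier →ₗ[ℚ] M'.carrier) : Prop :=
  (∀ (n : ℤ), ∀ x ∈ M.grading n, g x ∈ M'.grading n) ∧
  g.comp M.d = M'.d.comp g ∧
  g.comp M.actionMap = M'.actionMap.comp (TensorProduct.map LinearMap.id g)

/-- Morphisms of dg comodules: degree `0` graded chain maps commuting with the coaction. -/
def IsComoduleHom (C : DGCoalgebra) (N N' : DGComodule C)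
    (f : N.carrier →ₗ[ℚ] N'.carrier) : Prop :=
  (∀ (n : ℤ), ∀ x ∈ N.grading n, f x ∈ N'.grading n) ∧
  f.comp N.d = N'.d.comp f ∧
  (TensorProduct.map LinearMap.id f).comp N.coact = N'.coact.comp f

/-- The `A`-action on a twisted extension `A ⊗_τ N`: multiplication on the first factor. -/
def extAction (A : DGAlgebra) (N : Type) [AddCommGroup N] [Module ℚ N] :
    A.carrier ⊗[ℚ] (A.carrier ⊗[ℚ] N) →ₗ[ℚ] A.carrier ⊗[ℚ] N :=
  (TensorProduct.map A.mulMap LinearMap.id).comp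
    (TensorProduct.assoc ℚ A.carrier A.carrier N).symm.toLinearMap

/-- The differential of the twisted extension `A ⊗_τ N`:
`d(a ⊗ n) = da ⊗ n + (-1)^{|a|} a ⊗ dn - (-1)^{|a|} a·τ(n₍₀₎) ⊗ n₍₁₎`
for a `C`-comodule `(N, dN, ρ)`. -/
def extDiff (C : DGCoalgebra) (A : DGAlgebra) (τ : TwistingChain C A)
    (N : Type) [AddCommGroup N] [Module ℚ N]
    (dN : N →ₗ[ℚ] N) (ρ : N →ₗ[ℚ] C.carrier ⊗[ℚ] N) :
    A.carrier ⊗[ℚ] N →ₗ[ℚ] A.carrier ⊗[ℚ] N :=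
  TensorProduct.map A.d LinearMap.id + TensorProduct.map (parityOf A.grading) dN
    - (TensorProduct.map
        (A.mulMap.comp (TensorProduct.map (parityOf A.grading) τ.toFun)) LinearMap.id).comp
        ((TensorProduct.assoc ℚ A.carrier C.carrier N).symm.toLinearMap.comp
          (TensorProduct.map LinearMap.id ρ))

/-- The `C`-coaction on a twisted coextension `C ⊗^τ M`, namely `Δ ⊗ id`. -/
def coextCoact (C : DGCoalgebra) (M : Type) [AddCommGroup M] [Module ℚ M] :
    C.carrier ⊗[ℚ] M →ₗ[ℚ] C.carrier ⊗[ℚ] (C.carrier ⊗[ℚ] M) :=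
  (TensorProduct.assoc ℚ C.carrier C.carrier M).toLinearMap.comp
    (TensorProduct.map C.comul LinearMap.id)

/-- The differential of the twisted coextension `C ⊗^τ M`, expressed in terms of the map
`tact : C ⊗ M → M`, `c ⊗ m ↦ τ(c)·m`:
`d(c ⊗ m) = dc ⊗ m + (-1)^{|c|} c ⊗ dm + (-1)^{|c₍₀₎|} c₍₀₎ ⊗ τ(c₍₁₎)·m`. -/
def coextDiffFrom (C : DGCoalgebra) (M : Type) [AddCommGroup M] [Module ℚ M]
    (dM : M →ₗ[ℚ] M) (tact : C.carrier ⊗[ℚ] M →ₗ[ℚ] M) :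
    C.carrier ⊗[ℚ] M →ₗ[ℚ] C.carrier ⊗[ℚ] M :=
  TensorProduct.map C.d LinearMap.id + TensorProduct.map (parityOf C.grading) dM
    + (TensorProduct.map (parityOf C.grading) tact).comp (coextCoact C M)

/-- The differential of the twisted coextension `C ⊗^τ M` of an `A`-module `(M, dM, act)`. -/
def coextDiff (C : DGCoalgebra) (A : DGAlgebra) (τ : TwistingChain C A)
    (M : Type) [AddCommGroup M] [Module ℚ M]
    (dM : M →ₗ[ℚ] M) (act : A.carrier ⊗[ℚ] M →ₗ[ℚ] M) :
    C.carrier ⊗[ℚ] M →ₗ[ℚ] C.carrier ⊗[ℚ] M :=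
  coextDiffFrom C M dM (act.comp (TensorProduct.map τ.toFun LinearMap.id))

/-- Morphisms of dg algebras. -/
structure DGAlgebraHom (A B : DGAlgebra) where
  toLinearMap : A.carrier →ₗ[ℚ] B.carrier
  mem : ∀ (n : ℤ), ∀ x ∈ A.grading n, toLinearMap x ∈ B.grading n
  chain : toLinearMap.comp A.d = B.d.comp toLinearMap
  map_one : toLinearMap A.one = B.one
  map_mul : ∀ x y : A.carrier, toLinearMap (A.mul x y) = B.mul (toLinearMap x) (toLinearMap y)

/-- Data exhibiting a dg algebra as the cobar construction `ΩC` of a coaugmented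
dg coalgebra `C`, via the universal twisting chain `t : C ⇝ ΩC`:
dg algebra maps `ΩC → A` correspond bijectively to twisting chains `C ⇝ A`
vanishing on the coaugmentation. -/
structure CobarData (C : CoaugDGCoalgebra) where
  alg : DGAlgebra
  t : TwistingChain C.toDGCoalgebra alg
  t_one : t.toFun C.one = 0
  univ : ∀ (A : DGAlgebra) (τ : TwistingChain C.toDGCoalgebra A), τ.toFun C.one = 0 →
    ∃! F : DGAlgebraHom alg A, F.toLinearMap.comp t.toFun = τ.toFun

/-- A morphism of `C`-comodules is a `t`-equivalence if the induced morphism of twisted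
extensions `ΩC ⊗_t N → ΩC ⊗_t M` is a quasi-isomorphism. -/
def IsTEquiv (C : CoaugDGCoalgebra) (Ω : CobarData C) (N M : DGComodule C.toDGCoalgebra)
    (f : N.carrier →ₗ[ℚ] M.carrier) : Prop :=
  IsQuasiIso (extDiff C.toDGCoalgebra Ω.alg Ω.t N.carrier N.d N.coact)
    (extDiff C.toDGCoalgebra Ω.alg Ω.t M.carrier M.d M.coact)
    (TensorProduct.map LinearMap.id f)

section Helpers

open TensorProduct

variable {V W : Type} [AddCommGroup V] [Module ℚ V] [AddCommGroup W] [Module ℚ W]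

theorem parityOf_of_mem (g : ℤ → Submodule ℚ V) [DirectSum.Decomposition g] {n : ℤ} {x : V}
    (hx : x ∈ g n) : parityOf g x = ((-1 : ℚ) ^ n) • x := by
  have h : DirectSum.decompose g x = DirectSum.of (fun i => g i) n ⟨x, hx⟩ :=
    DirectSum.decompose_of_mem g hx
  simp only [parityOf, signOpOf, LinearMap.comp_apply, LinearEquiv.coe_coe,
    DirectSum.decomposeLinearEquiv_apply, h, one_mul]
  erw [DirectSum.toModule_lof]
  simp

theorem hom_ind (g : ℤ → Submodule ℚ V) [DirectSum.Decomposition g] {p : V → Prop}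
    (h0 : p 0) (hh : ∀ n, ∀ x ∈ g n, p x) (ha : ∀ x y, p x → p y → p (x + y)) (x : V) : p x :=
  DirectSum.Decomposition.inductionOn g h0 (fun {i} m => hh i m.1 m.2) ha x

theorem sgn_sq (n : ℤ) : ((-1 : ℚ) ^ n) * ((-1 : ℚ) ^ n) = 1 := by
  rcases Int.even_or_odd n with h | h
  · simp [h.neg_one_zpow]
  · simp [h.neg_one_zpow]

theorem parity_parity (g : ℤ → Submodule ℚ V) [DirectSum.Decomposition g] (x : V) :
    parityOf g (parityOf g x) = x := by
  induction x using hom_ind g with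
  | h0 => simp
  | hh n x hx => simp [parityOf_of_mem g hx, smul_smul, sgn_sq]
  | ha x y hx hy => simp [hx, hy]

theorem parity_odd (g : ℤ → Submodule ℚ V) [DirectSum.Decomposition g]
    (g' : ℤ → Submodule ℚ W) [DirectSum.Decomposition g'] (φ : V →ₗ[ℚ] W)
    (hφ : ∀ n, ∀ x ∈ g n, φ x ∈ g' (n - 1)) (x : V) :
    parityOf g' (φ x) = - φ (parityOf g x) := by
  induction x using hom_ind g with
  | h0 => simp
  | hh n x hx =>
    rw [parityOf_of_mem g hx, parityOf_of_mem g' (hφ n x hx), zpow_sub_one₀ (by norm_num)]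
    simp
  | ha x y hx hy => simp [hx, hy]; abel

theorem tg_ind {g : ℤ → Submodule ℚ V} {g' : ℤ → Submodule ℚ W} {n : ℤ}
    {p : V ⊗[ℚ] W → Prop} (h0 : p 0) (ha : ∀ x y, p x → p y → p (x + y))
    (ht : ∀ i j, i + j = n → ∀ a ∈ g i, ∀ b ∈ g' j, p (a ⊗ₜ b)) (x : V ⊗[ℚ] W)
    (hx : x ∈ tensorGrading g g' n) : p x := by
  unfold tensorGrading at hx
  induction hx using Submodule.iSup_induction' with
  | mem i x hx =>
    obtain ⟨⟨i, j⟩, hij⟩ := i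
    obtain ⟨y, rfl⟩ := hx
    induction y with
    | zero => simpa using h0
    | add a b ha' hb => rw [map_add]; exact ha _ _ ha' hb
    | tmul a b => exact ht i j hij _ a.2 _ b.2
  | zero => exact h0
  | add x y _ _ hx hy => exact ha _ _ hx hy

theorem tmul_mem_tg {g : ℤ → Submodule ℚ V} {g' : ℤ → Submodule ℚ W} {n i j : ℤ} (h : i + j = n)
    {a : V} {b : W} (ha : a ∈ g i) (hb : b ∈ g' j) : a ⊗ₜ[ℚ] b ∈ tensorGrading g g' n :=
  Submodule.mem_iSup_of_mem ⟨(i, j), h⟩ ⟨(⟨a, ha⟩ : g i) ⊗ₜ (⟨b, hb⟩ : g' j), by simp⟩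

theorem parity_tensor (g : ℤ → Submodule ℚ V) [DirectSum.Decomposition g]
    (g' : ℤ → Submodule ℚ W) [DirectSum.Decomposition g'] {n : ℤ} (x : V ⊗[ℚ] W)
    (hx : x ∈ tensorGrading g g' n) :
    TensorProduct.map (parityOf g) (parityOf g') x = ((-1 : ℚ) ^ n) • x := by
  refine tg_ind (p := fun x => TensorProduct.map (parityOf g) (parityOf g') x
    = ((-1 : ℚ) ^ n) • x) (by simp) (fun x y hx hy => by simp [hx, hy]) ?_ x hx
  intro i j hij a ha b hb
  rw [map_tmul, parityOf_of_mem g ha, parityOf_of_mem g' hb, smul_tmul_smul, ← hij,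
    zpow_add₀ (by norm_num)]

theorem parity_comul (C : DGCoalgebra) (x : C.carrier) :
    C.comul (parityOf C.grading x)
      = TensorProduct.map (parityOf C.grading) (parityOf C.grading) (C.comul x) := by
  induction x using hom_ind C.grading with
  | h0 => simp
  | hh n x hx =>
    rw [parityOf_of_mem _ hx, parity_tensor _ _ _ (C.comul_mem n x hx), map_smul]
  | ha x y hx hy => simp only [map_add, hx, hy]

theorem parity_counit (C : DGCoalgebra) (x : C.carrier) :
    C.counit (parityOf C.grading x) = C.counit x := by
  induction x using hom_ind C.grading with
  | h0 => simp
  | hh n x hx =>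
    rw [parityOf_of_mem _ hx, map_smul]
    by_cases hn : n = 0
    · simp [hn]
    · simp [C.counit_zero n hn x hx]
  | ha x y hx hy => simp only [map_add, hx, hy]

theorem parity_d (V : DGVect) (x : V.carrier) :
    parityOf V.grading (V.d x) = - V.d (parityOf V.grading x) :=
  parity_odd _ _ _ V.d_mem x

theorem alg_leibniz (A : DGAlgebra) (x y : A.carrier) :
    A.d (A.mul x y) = A.mul (A.d x) y + A.mul (parityOf A.grading x) (A.d y) := by
  induction x using hom_ind A.grading with
  | h0 => simp
  | hh n x hx => rw [parityOf_of_mem _ hx, A.leibniz n x y hx]; simp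
  | ha x y hx hy => simp only [map_add, hx, hy, LinearMap.add_apply]; abel

theorem alg_parity_mul (A : DGAlgebra) (x y : A.carrier) :
    parityOf A.grading (A.mul x y) = A.mul (parityOf A.grading x) (parityOf A.grading y) := by
  induction x using hom_ind A.grading with
  | h0 => simp
  | hh n x hx =>
    induction y using hom_ind A.grading with
    | h0 => simp
    | hh m y hy =>
      rw [parityOf_of_mem _ hx, parityOf_of_mem _ hy, parityOf_of_mem _ (A.mul_mem _ _ _ _ hx hy),
        zpow_add₀ (by norm_num)]
      simp [smul_smul, mul_comm]
    | ha x y hx hy => simp only [map_add, hx, hy]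
  | ha x y hx hy => simp only [map_add, hx, hy, LinearMap.add_apply]

theorem alg_parity_one (A : DGAlgebra) : parityOf A.grading A.one = A.one := by
  rw [parityOf_of_mem _ A.one_mem]; simp

theorem alg_d_one (A : DGAlgebra) : A.d A.one = 0 := by
  have := alg_leibniz A A.one A.one
  rw [alg_parity_one, A.one_mul', A.one_mul', A.mul_one'] at this
  simpa using this

/-! ### Filtered contraction -/

theorem filtered_acyclic (D : V →ₗ[ℚ] V) (hD : ∀ x, D (D x) = 0) (H : V →ₗ[ℚ] V)
    (G : ℤ → Submodule ℚ V) (b : ℤ) (hb : ∀ p, p < b → G p = ⊥) (hG : ∀ x, ∃ p, x ∈ G p)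
    (hH : ∀ p, ∀ x ∈ G p, x - D (H x) - H (D x) ∈ G (p - 1)) (x : V) (hx : D x = 0) :
    ∃ z, x = D z := by
  have key : ∀ n : ℕ, ∀ x ∈ G (b - 1 + n), D x = 0 → ∃ z, x = D z := by
    intro n
    induction n with
    | zero =>
      intro x hx _
      rw [hb _ (by simp)] at hx
      exact ⟨0, by simpa using hx⟩
    | succ n ih =>
      intro x hx hd
      have h1 := hH _ x hx
      rw [hd, map_zero, sub_zero] at h1
      have e : b - 1 + ((n + 1 : ℕ) : ℤ) - 1 = b - 1 + n := by push_cast; ring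
      rw [e] at h1
      obtain ⟨z, hz⟩ := ih _ h1 (by rw [map_sub, hD, hd, sub_zero])
      exact ⟨z + H x, by rw [map_add, ← hz]; abel⟩
  obtain ⟨p, hp⟩ := hG x
  by_cases h : p < b
  · rw [hb p h] at hp
    exact ⟨0, by simpa using hp⟩
  · have e : b - 1 + ((p - b + 1).toNat : ℤ) = p := by
      rw [Int.toNat_of_nonneg (by omega)]; ring
    exact key (p - b + 1).toNat x (by rw [e]; exact hp) hx

/-- Existence of a contraction of an acyclic complex of vector spaces. -/
theorem exists_contraction (d : V →ₗ[ℚ] V) (hd : ∀ x, d (d x) = 0)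
    (hac : ∀ x, d x = 0 → ∃ z, x = d z) :
    ∃ h : V →ₗ[ℚ] V, ∀ x, d (h x) + h (d x) = x := by
  obtain ⟨s, hs⟩ := LinearMap.exists_rightInverse_of_surjective d.rangeRestrict
    (LinearMap.range_rangeRestrict d)
  have hs' : ∀ y : LinearMap.range d, d (s y) = y := fun y => by
    have := congrArg Subtype.val (LinearMap.congr_fun hs y)
    simpa using this
  let q : V →ₗ[ℚ] V := LinearMap.id - s.comp d.rangeRestrict
  have hq : ∀ x, q x ∈ LinearMap.range d := fun x => by
    have : d (q x) = 0 := by simp [q, hs']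
    obtain ⟨z, hz⟩ := hac _ this
    exact ⟨z, hz.symm⟩
  refine ⟨s.comp (q.codRestrict _ hq), fun x => ?_⟩
  simp only [LinearMap.comp_apply, hs']
  have e : q.codRestrict _ hq (d x) = d.rangeRestrict x := by
    apply Subtype.ext
    have : d.rangeRestrict (d x) = 0 := Subtype.ext (hd x)
    simp [q, this]
  rw [e]
  simp [q]

/-- graded version -/
theorem exists_graded_contraction (g : ℤ → Submodule ℚ V) [DirectSum.Decomposition g]
    (d : V →ₗ[ℚ] V) (hmem : ∀ n, ∀ x ∈ g n, d x ∈ g (n - 1)) (hd : ∀ x, d (d x) = 0)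
    (hac : ∀ x, d x = 0 → ∃ z, x = d z) :
    ∃ h : V →ₗ[ℚ] V, (∀ x, d (h x) + h (d x) = x) ∧ ∀ n, ∀ x ∈ g n, h x ∈ g (n + 1) := by
  obtain ⟨h, hh⟩ := exists_contraction d hd hac
  let π : ℤ → V →ₗ[ℚ] V := fun n =>
    (g n).subtype.comp ((DirectSum.component ℚ ℤ (fun i => g i) n).comp
      (DirectSum.decomposeLinearEquiv g).toLinearMap)
  have hπ : ∀ n x, π n x = (DirectSum.decompose g x n : V) := fun n x => rfl
  have hπm : ∀ n x, π n x ∈ g n := fun n x => by rw [hπ]; exact Subtype.mem _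
  have hπd : ∀ n x, d (π (n + 1) x) = π n (d x) := by
    intro n x
    induction x using hom_ind g with
    | h0 => simp
    | hh m x hx =>
      rw [hπ, hπ]
      by_cases hm : m = n + 1
      · subst hm
        have := hmem _ x hx
        rw [add_sub_cancel_right] at this
        rw [DirectSum.decompose_of_mem_same g hx, DirectSum.decompose_of_mem_same g this]
      · rw [DirectSum.decompose_of_mem_ne g hx hm,
          DirectSum.decompose_of_mem_ne g (hmem _ x hx) (by omega)]
        simp
    | ha x y hx hy => simp only [map_add, hx, hy]
  let k : V →ₗ[ℚ] V := (DirectSum.toModule ℚ ℤ V fun n => (π (n + 1)).comp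
      (h.comp (g n).subtype)).comp (DirectSum.decomposeLinearEquiv g).toLinearMap
  have hk : ∀ n, ∀ x ∈ g n, k x = π (n + 1) (h x) := by
    intro n x hx
    have h : DirectSum.decompose g x = DirectSum.of (fun i => g i) n ⟨x, hx⟩ :=
      DirectSum.decompose_of_mem g hx
    simp only [k, LinearMap.comp_apply, LinearEquiv.coe_coe,
      DirectSum.decomposeLinearEquiv_apply, h]
    erw [DirectSum.toModule_lof]
    simp
  refine ⟨k, fun x => ?_, fun n x hx => by rw [hk n x hx]; exact hπm _ _⟩
  induction x using hom_ind g with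
  | h0 => simp
  | hh n x hx =>
    rw [hk n x hx, hk _ _ (hmem n x hx), hπd, sub_add_cancel, ← map_add, hh, hπ,
      DirectSum.decompose_of_mem_same g hx]
  | ha x y hx hy =>
    simp only [map_add]
    nth_rw 3 [← hx]
    nth_rw 3 [← hy]
    abel

theorem isQuasiIso_iff_cone (dV : V →ₗ[ℚ] V) (dW : W →ₗ[ℚ] W) (f : V →ₗ[ℚ] W)
    (hf : ∀ x, f (dV x) = dW (f x)) :
    IsQuasiIso dV dW f ↔ ∀ v w, dV v = 0 → f v + dW w = 0 →
      ∃ v' w', v = - dV v' ∧ w = f v' + dW w' := by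
  constructor
  · rintro ⟨h1, h2⟩ v w hv hw
    obtain ⟨z, hz⟩ := h1 v hv ⟨-w, by rw [map_neg]; exact eq_neg_of_add_eq_zero_left hw⟩
    obtain ⟨x, hx, y, hy⟩ := h2 (w + f z) (by
      rw [map_add, ← hf, ← hz, add_comm]; exact hw)
    refine ⟨x - z, y, by simp [hx, ← hz], ?_⟩
    rw [map_sub, ← hy]; abel
  · intro h
    refine ⟨fun x hx ⟨y, hy⟩ => ?_, fun w hw => ?_⟩
    · obtain ⟨v', w', h1, _⟩ := h x (-y) hx (by simp [hy])
      exact ⟨-v', by simpa using h1⟩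
    · obtain ⟨v', w', h1, h2⟩ := h 0 w (by simp) (by simpa using hw)
      exact ⟨v', by simpa using h1.symm, w', by rw [h2]; abel⟩

end Helpers

section Main

open TensorProduct

/-! ### The twisted extension -/

variable {C : DGCoalgebra} {A : DGAlgebra} (τ : TwistingChain C A)
  {K : Type} [AddCommGroup K] [Module ℚ K]

/-- `c ⊗ k ↦ b · τ c ⊗ k` -/
def psi (K : Type) [AddCommGroup K] [Module ℚ K] (b : A.carrier) :
    C.carrier ⊗[ℚ] K →ₗ[ℚ] A.carrier ⊗[ℚ] K :=
  TensorProduct.map ((A.mul b).comp τ.toFun) LinearMap.id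

theorem psi_tmul (b : A.carrier) (c : C.carrier) (k : K) :
    psi τ K b (c ⊗ₜ k) = A.mul b (τ.toFun c) ⊗ₜ k := by
  simp [psi]

theorem psi_neg (b : A.carrier) (x : C.carrier ⊗[ℚ] K) : psi τ K (-b) x = - psi τ K b x := by
  induction x with
  | zero => simp
  | add x y hx hy => simp only [map_add, hx, hy]; abel
  | tmul c k => simp [psi_tmul, neg_tmul]

theorem tau_parity (c : C.carrier) :
    parityOf A.grading (τ.toFun c) = - τ.toFun (parityOf C.grading c) :=
  parity_odd _ _ _ τ.mem c

theorem extDiff_tmul (dK : K →ₗ[ℚ] K) (ρ : K →ₗ[ℚ] C.carrier ⊗[ℚ] K) (a : A.carrier) (k : K) :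
    extDiff C A τ K dK ρ (a ⊗ₜ k)
      = A.d a ⊗ₜ k + parityOf A.grading a ⊗ₜ dK k - psi τ K (parityOf A.grading a) (ρ k) := by
  have h : ∀ x : C.carrier ⊗[ℚ] K,
      (TensorProduct.map (A.mulMap.comp (TensorProduct.map (parityOf A.grading) τ.toFun))
        LinearMap.id) ((TensorProduct.assoc ℚ A.carrier C.carrier K).symm (a ⊗ₜ x))
      = psi τ K (parityOf A.grading a) x := by
    intro x
    induction x with
    | zero => simp
    | add x y hx hy => rw [tmul_add, map_add, map_add, hx, hy, map_add]
    | tmul c k => simp [psi_tmul, DGAlgebra.mulMap]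
  simp [extDiff, h]

theorem extDiff_psi (dK : K →ₗ[ℚ] K) (ρ : K →ₗ[ℚ] C.carrier ⊗[ℚ] K)
    (hρ : (TensorProduct.assoc ℚ C.carrier C.carrier K).toLinearMap.comp
      ((TensorProduct.map C.comul LinearMap.id).comp ρ)
      = (TensorProduct.map LinearMap.id ρ).comp ρ) (b : A.carrier) (k : K) :
    extDiff C A τ K dK ρ (psi τ K b (ρ k))
      = psi τ K (A.d b) (ρ k) - psi τ K (parityOf A.grading b)
          (TensorProduct.map C.d LinearMap.id (ρ k) +
            TensorProduct.map (parityOf C.grading) dK (ρ k)) := by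
  -- iterated twisting
  let ψ : C.carrier ⊗[ℚ] (C.carrier ⊗[ℚ] K) →ₗ[ℚ] A.carrier ⊗[ℚ] K :=
    (TensorProduct.map ((A.mul (parityOf A.grading b)).comp (A.mulMap.comp
      (TensorProduct.map (τ.toFun.comp (parityOf C.grading)) τ.toFun))) LinearMap.id).comp
      (TensorProduct.assoc ℚ C.carrier C.carrier K).symm.toLinearMap
  have hψ : ∀ c, ∀ y : C.carrier ⊗[ℚ] K, psi τ K (parityOf A.grading (A.mul b (τ.toFun c))) y
      = - ψ (c ⊗ₜ y) := by
    intro c y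
    induction y with
    | zero => simp
    | add x y hx hy => rw [tmul_add, map_add, map_add, hx, hy]; abel
    | tmul c' k =>
      simp [psi_tmul, ψ, alg_parity_mul, tau_parity, DGAlgebra.mulMap, A.mul_assoc', neg_tmul]
  have h1 : ∀ y : C.carrier ⊗[ℚ] K, extDiff C A τ K dK ρ (psi τ K b y)
      = psi τ K (A.d b) y
        + TensorProduct.map ((A.mul (parityOf A.grading b)).comp (A.d.comp τ.toFun))
            LinearMap.id y
        - psi τ K (parityOf A.grading b) (TensorProduct.map (parityOf C.grading) dK y)
        + ψ (TensorProduct.map LinearMap.id ρ y) := by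
    intro y
    induction y with
    | zero => simp
    | add x y hx hy => simp only [map_add, hx, hy]; abel
    | tmul c k =>
      rw [psi_tmul, extDiff_tmul, hψ]
      simp only [map_tmul, psi_tmul, alg_leibniz, alg_parity_mul, tau_parity, add_tmul,
        LinearMap.comp_apply, LinearMap.id_apply, map_neg, neg_tmul]
      abel
  have h2 : ∀ y : C.carrier ⊗[ℚ] K,
      ψ ((TensorProduct.assoc ℚ C.carrier C.carrier K) (TensorProduct.map C.comul LinearMap.id y))
      = - TensorProduct.map ((A.mul (parityOf A.grading b)).comp (A.d.comp τ.toFun))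
            LinearMap.id y
        - psi τ K (parityOf A.grading b) (TensorProduct.map C.d LinearMap.id y) := by
    intro y
    induction y with
    | zero => simp
    | add x y hx hy => simp only [map_add, hx, hy]; abel
    | tmul c k =>
      have ht := LinearMap.congr_fun τ.twist c
      simp only [LinearMap.add_apply, LinearMap.comp_apply, LinearMap.zero_apply] at ht
      have ht' := eq_neg_of_add_eq_zero_right ht
      simp only [ψ, map_tmul, psi_tmul, LinearMap.comp_apply, LinearMap.id_apply,
        LinearEquiv.coe_coe, LinearEquiv.symm_apply_apply]
      rw [ht', map_neg, map_add, neg_tmul, add_tmul]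
      abel
  have h3 := LinearMap.congr_fun hρ k
  simp only [LinearMap.comp_apply, LinearEquiv.coe_coe] at h3
  rw [h1, ← h3, h2, map_add]
  abel

theorem extDiff_sq (dK : K →ₗ[ℚ] K) (hd : ∀ x, dK (dK x) = 0) (ρ : K →ₗ[ℚ] C.carrier ⊗[ℚ] K)
    (hρ : (TensorProduct.assoc ℚ C.carrier C.carrier K).toLinearMap.comp
      ((TensorProduct.map C.comul LinearMap.id).comp ρ)
      = (TensorProduct.map LinearMap.id ρ).comp ρ)
    (hch : ρ.comp dK
      = (TensorProduct.map C.d LinearMap.id + TensorProduct.map (parityOf C.grading) dK).comp ρ)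
    (x : A.carrier ⊗[ℚ] K) :
    extDiff C A τ K dK ρ (extDiff C A τ K dK ρ x) = 0 := by
  induction x with
  | zero => simp
  | add x y hx hy => simp only [map_add, hx, hy, add_zero]
  | tmul a k =>
    have h := LinearMap.congr_fun hch k
    simp only [LinearMap.comp_apply, LinearMap.add_apply] at h
    have hdd : A.d (A.d a) = 0 := LinearMap.congr_fun A.d_sq a
    rw [extDiff_tmul, map_sub, map_add, extDiff_tmul, extDiff_tmul, extDiff_psi _ _ _ hρ, h, hd, hdd,
      parity_parity]
    have e := parity_d A.toDGVect a
    rw [e, psi_neg]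
    simp only [zero_tmul, tmul_zero, neg_tmul]
    abel

/-! ### Direction 2 -/

/-- tensors whose right factor has degree at most `p` -/
def filtR {V W : Type} [AddCommGroup V] [Module ℚ V] [AddCommGroup W] [Module ℚ W]
    (g : ℤ → Submodule ℚ W) (p : ℤ) : Submodule ℚ (V ⊗[ℚ] W) :=
  Submodule.span ℚ {x | ∃ i ≤ p, ∃ a : V, ∃ k ∈ g i, x = a ⊗ₜ k}

/-- tensors whose left factor has degree at most `p` -/
def filtL {V W : Type} [AddCommGroup V] [Module ℚ V] [AddCommGroup W] [Module ℚ W]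
    (g : ℤ → Submodule ℚ V) (p : ℤ) : Submodule ℚ (V ⊗[ℚ] W) :=
  Submodule.span ℚ {x | ∃ i ≤ p, ∃ c ∈ g i, ∃ w : W, x = c ⊗ₜ w}

section filt
variable {V W : Type} [AddCommGroup V] [Module ℚ V] [AddCommGroup W] [Module ℚ W]

theorem filtR_mono (g : ℤ → Submodule ℚ W) {p q : ℤ} (h : p ≤ q) :
    filtR (V := V) g p ≤ filtR g q :=
  Submodule.span_mono (fun _ ⟨i, hi, r⟩ => ⟨i, hi.trans h, r⟩)

theorem filtL_mono (g : ℤ → Submodule ℚ V) {p q : ℤ} (h : p ≤ q) :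
    filtL (W := W) g p ≤ filtL g q :=
  Submodule.span_mono (fun _ ⟨i, hi, r⟩ => ⟨i, hi.trans h, r⟩)

theorem tmul_mem_filtR {g : ℤ → Submodule ℚ W} {p i : ℤ} (h : i ≤ p) (a : V) {k : W}
    (hk : k ∈ g i) : a ⊗ₜ[ℚ] k ∈ filtR (V := V) g p :=
  Submodule.subset_span ⟨i, h, a, k, hk, rfl⟩

theorem tmul_mem_filtL {g : ℤ → Submodule ℚ V} {p i : ℤ} (h : i ≤ p) {c : V} (hc : c ∈ g i)
    (w : W) : c ⊗ₜ[ℚ] w ∈ filtL (W := W) g p :=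
  Submodule.subset_span ⟨i, h, c, hc, w, rfl⟩

theorem filtR_bot (g : ℤ → Submodule ℚ W) {b : ℤ} (hb : ∀ n, n < b → g n = ⊥) (p : ℤ)
    (hp : p < b) : filtR (V := V) g p = ⊥ := by
  refine Submodule.span_eq_bot.2 ?_
  rintro _ ⟨i, hi, a, k, hk, rfl⟩
  rw [hb i (by omega)] at hk
  simp [(Submodule.mem_bot _).1 hk]

theorem filtL_bot (g : ℤ → Submodule ℚ V) {b : ℤ} (hb : ∀ n, n < b → g n = ⊥) (p : ℤ)
    (hp : p < b) : filtL (W := W) g p = ⊥ := by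
  refine Submodule.span_eq_bot.2 ?_
  rintro _ ⟨i, hi, a, hk, w, rfl⟩
  rw [hb i (by omega)] at hk
  simp [(Submodule.mem_bot _).1 hk]

theorem filtR_exh (g : ℤ → Submodule ℚ W) [DirectSum.Decomposition g] (x : V ⊗[ℚ] W) :
    ∃ p, x ∈ filtR g p := by
  induction x with
  | zero => exact ⟨0, Submodule.zero_mem _⟩
  | add x y hx hy =>
    obtain ⟨p, hp⟩ := hx
    obtain ⟨q, hq⟩ := hy
    exact ⟨max p q, Submodule.add_mem _ (filtR_mono g (le_max_left _ _) hp)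
      (filtR_mono g (le_max_right _ _) hq)⟩
  | tmul a k =>
    induction k using hom_ind g with
    | h0 => exact ⟨0, by simp⟩
    | hh n k hk => exact ⟨n, tmul_mem_filtR le_rfl a hk⟩
    | ha x y hx hy =>
      obtain ⟨p, hp⟩ := hx
      obtain ⟨q, hq⟩ := hy
      exact ⟨max p q, by
        rw [tmul_add]
        exact Submodule.add_mem _ (filtR_mono g (le_max_left _ _) hp)
          (filtR_mono g (le_max_right _ _) hq)⟩

theorem filtL_exh (g : ℤ → Submodule ℚ V) [DirectSum.Decomposition g] (x : V ⊗[ℚ] W) :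
    ∃ p, x ∈ filtL g p := by
  induction x with
  | zero => exact ⟨0, Submodule.zero_mem _⟩
  | add x y hx hy =>
    obtain ⟨p, hp⟩ := hx
    obtain ⟨q, hq⟩ := hy
    exact ⟨max p q, Submodule.add_mem _ (filtL_mono g (le_max_left _ _) hp)
      (filtL_mono g (le_max_right _ _) hq)⟩
  | tmul a k =>
    induction a using hom_ind g with
    | h0 => exact ⟨0, by simp⟩
    | hh n a hk => exact ⟨n, tmul_mem_filtL le_rfl hk k⟩
    | ha x y hx hy =>
      obtain ⟨p, hp⟩ := hx
      obtain ⟨q, hq⟩ := hy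
      exact ⟨max p q, by
        rw [add_tmul]
        exact Submodule.add_mem _ (filtL_mono g (le_max_left _ _) hp)
          (filtL_mono g (le_max_right _ _) hq)⟩

end filt

theorem ext_acyclic (hτ : ∀ i ≤ 1, ∀ c ∈ C.grading i, τ.toFun c = 0)
    (g : ℤ → Submodule ℚ K) [DirectSum.Decomposition g] (b : ℤ) (hb : ∀ n, n < b → g n = ⊥)
    (dK : K →ₗ[ℚ] K) (hmem : ∀ n, ∀ x ∈ g n, dK x ∈ g (n - 1))
    (hd : ∀ x, dK (dK x) = 0) (ρ : K →ₗ[ℚ] C.carrier ⊗[ℚ] K)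
    (hρm : ∀ n, ∀ x ∈ g n, ρ x ∈ tensorGrading C.grading g n)
    (hρ : (TensorProduct.assoc ℚ C.carrier C.carrier K).toLinearMap.comp
      ((TensorProduct.map C.comul LinearMap.id).comp ρ)
      = (TensorProduct.map LinearMap.id ρ).comp ρ)
    (hch : ρ.comp dK
      = (TensorProduct.map C.d LinearMap.id + TensorProduct.map (parityOf C.grading) dK).comp ρ)
    (hac : ∀ x, dK x = 0 → ∃ z, x = dK z)
    (x : A.carrier ⊗[ℚ] K) (hx : extDiff C A τ K dK ρ x = 0) :
    ∃ z, x = extDiff C A τ K dK ρ z := by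
  obtain ⟨h, hh, hhm⟩ := exists_graded_contraction g dK hmem hd hac
  have hpsi : ∀ (a : A.carrier) n, ∀ k ∈ g n, psi τ K a (ρ k) ∈ filtR (V := A.carrier) g (n - 2) := by
    intro a n k hk
    refine tg_ind (p := fun y => psi τ K a y ∈ filtR (V := A.carrier) g (n - 2)) (by simp)
      (fun x y hx hy => by rw [map_add]; exact Submodule.add_mem _ hx hy) ?_ _ (hρm n k hk)
    intro i j hij c hc k' hk'
    rw [psi_tmul]
    by_cases hi : i ≤ 1
    · simp [hτ i hi c hc]
    · exact tmul_mem_filtR (by omega) _ hk'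
  have hH : ∀ p, ∀ y ∈ filtR (V := A.carrier) g p,
      TensorProduct.map (parityOf A.grading) h y ∈ filtR (V := A.carrier) g (p + 1) := by
    intro p y hy
    refine Submodule.span_induction (p := fun y _ => TensorProduct.map (parityOf A.grading) h y
      ∈ filtR (V := A.carrier) g (p + 1)) ?_ (by simp)
      (fun x y _ _ hx hy => by rw [map_add]; exact Submodule.add_mem _ hx hy)
      (fun r x _ hx => by rw [map_smul]; exact Submodule.smul_mem _ _ hx) hy
    rintro _ ⟨i, hi, a, k, hk, rfl⟩
    exact tmul_mem_filtR (by omega) _ (hhm i k hk)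
  refine filtered_acyclic (extDiff C A τ K dK ρ) (extDiff_sq τ dK hd ρ hρ hch)
    (TensorProduct.map (parityOf A.grading) h) (filtR g) b (filtR_bot g hb) (filtR_exh g) ?_ x hx
  intro p y hy
  refine Submodule.span_induction (p := fun y _ => y - extDiff C A τ K dK ρ
      (TensorProduct.map (parityOf A.grading) h y)
      - TensorProduct.map (parityOf A.grading) h (extDiff C A τ K dK ρ y)
      ∈ filtR (V := A.carrier) g (p - 1)) ?_ (by simp)
      (fun x y _ _ hx hy => by
        simp only [map_add]
        convert Submodule.add_mem _ hx hy using 1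
        abel)
      (fun r x _ hx => by
        simp only [map_smul, ← smul_sub]; exact Submodule.smul_mem _ _ hx) hy
  rintro _ ⟨i, hi, a, k, hk, rfl⟩
  have e : a ⊗ₜ k - extDiff C A τ K dK ρ (TensorProduct.map (parityOf A.grading) h (a ⊗ₜ k))
      - TensorProduct.map (parityOf A.grading) h (extDiff C A τ K dK ρ (a ⊗ₜ k))
      = psi τ K a (ρ (h k)) + TensorProduct.map (parityOf A.grading) h
          (psi τ K (parityOf A.grading a) (ρ k)) := by
    simp only [map_tmul, extDiff_tmul, map_sub, map_add, parity_parity]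
    have e1 := parity_d A.toDGVect a
    rw [e1, neg_tmul]
    nth_rw 1 [← hh k]
    rw [tmul_add]
    abel
  rw [e]
  refine Submodule.add_mem _ (filtR_mono g (by omega) (hpsi a _ _ (hhm i k hk))) ?_
  exact filtR_mono g (by omega) (hH _ _ (hpsi _ _ _ hk))

end Main

section Coext

open TensorProduct

variable {C : DGCoalgebra} {P : Type} [AddCommGroup P] [Module ℚ P]

/-- differential of the twisted coextension -/
def coD (C : DGCoalgebra) (dP : P →ₗ[ℚ] P) (T : C.carrier →ₗ[ℚ] P →ₗ[ℚ] P) :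
    C.carrier ⊗[ℚ] P →ₗ[ℚ] C.carrier ⊗[ℚ] P :=
  TensorProduct.map C.d LinearMap.id + TensorProduct.map (parityOf C.grading) dP
    + (TensorProduct.map (parityOf C.grading) (TensorProduct.lift T)).comp
      ((TensorProduct.assoc ℚ C.carrier C.carrier P).toLinearMap.comp
        (TensorProduct.map C.comul LinearMap.id))

theorem coD_tmul (dP : P →ₗ[ℚ] P) (T : C.carrier →ₗ[ℚ] P →ₗ[ℚ] P) (c : C.carrier) (p : P) :
    coD C dP T (c ⊗ₜ p) = C.d c ⊗ₜ p + parityOf C.grading c ⊗ₜ dP p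
      + TensorProduct.map (parityOf C.grading) (T.flip p) (C.comul c) := by
  have h : ∀ x : C.carrier ⊗[ℚ] C.carrier,
      TensorProduct.map (parityOf C.grading) (TensorProduct.lift T)
        ((TensorProduct.assoc ℚ C.carrier C.carrier P) (x ⊗ₜ p))
      = TensorProduct.map (parityOf C.grading) (T.flip p) x := by
    intro x
    induction x with
    | zero => simp
    | add x y hx hy => simp only [add_tmul, map_add, hx, hy]
    | tmul u v => simp
  simp [coD, h]

/-- Maurer-Cartan equation -/
def MC (C : DGCoalgebra) (dP : P →ₗ[ℚ] P) (T : C.carrier →ₗ[ℚ] P →ₗ[ℚ] P) : Prop :=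
  ∀ c p, dP (T c p) + T (C.d c) p + T (parityOf C.grading c) (dP p)
    + TensorProduct.lift ((T.comp (parityOf C.grading)).compl₂ (T.flip p)) (C.comul c) = 0

theorem coD_theta (dP : P →ₗ[ℚ] P)
    (T : C.carrier →ₗ[ℚ] P →ₗ[ℚ] P) (hT : MC C dP T) (c : C.carrier) (p : P) :
    coD C dP T (TensorProduct.map (parityOf C.grading) (T.flip p) (C.comul c))
      = TensorProduct.map (C.d.comp (parityOf C.grading)) (T.flip p) (C.comul c)
        - TensorProduct.map LinearMap.id ((T.flip p).comp C.d) (C.comul c)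
        - TensorProduct.map LinearMap.id ((T.flip (dP p)).comp (parityOf C.grading))
            (C.comul c) := by
  let Λ : C.carrier ⊗[ℚ] (C.carrier ⊗[ℚ] C.carrier) →ₗ[ℚ] C.carrier ⊗[ℚ] P :=
    TensorProduct.map LinearMap.id
      (TensorProduct.lift ((T.comp (parityOf C.grading)).compl₂ (T.flip p)))
  have h0 : ∀ (c' : C.carrier) (x : C.carrier ⊗[ℚ] C.carrier),
      TensorProduct.map (parityOf C.grading) (T.flip (T c' p))
        (TensorProduct.map (parityOf C.grading) (parityOf C.grading) x)
      = Λ (TensorProduct.assoc ℚ C.carrier C.carrier C.carrier (x ⊗ₜ c')) := by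
    intro c' x
    induction x with
    | zero => simp
    | add x y hx hy => simp only [add_tmul, map_add, hx, hy]
    | tmul u v => simp [Λ, parity_parity]
  have h1 : ∀ x : C.carrier ⊗[ℚ] C.carrier,
      coD C dP T (TensorProduct.map (parityOf C.grading) (T.flip p) x)
      = TensorProduct.map (C.d.comp (parityOf C.grading)) (T.flip p) x
        + TensorProduct.map LinearMap.id (dP.comp (T.flip p)) x
        + Λ (TensorProduct.assoc ℚ C.carrier C.carrier C.carrier
            (TensorProduct.map C.comul LinearMap.id x)) := by
    intro x
    induction x with
    | zero => simp
    | add x y hx hy => simp only [map_add, hx, hy]; abel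
    | tmul u v =>
      rw [map_tmul, coD_tmul, parity_comul, parity_parity]
      simp only [LinearMap.flip_apply, map_tmul, LinearMap.comp_apply, LinearMap.id_apply]
      rw [h0]
  have h2 : ∀ x : C.carrier ⊗[ℚ] C.carrier,
      Λ (TensorProduct.map LinearMap.id C.comul x)
      = - TensorProduct.map LinearMap.id (dP.comp (T.flip p)) x
        - TensorProduct.map LinearMap.id ((T.flip p).comp C.d) x
        - TensorProduct.map LinearMap.id ((T.flip (dP p)).comp (parityOf C.grading)) x := by
    intro x
    induction x with
    | zero => simp
    | add x y hx hy => simp only [map_add, hx, hy]; abel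
    | tmul u v =>
      simp only [Λ, map_tmul, LinearMap.id_apply, LinearMap.comp_apply, LinearMap.flip_apply]
      rw [eq_neg_of_add_eq_zero_right (hT v p), tmul_neg, tmul_add, tmul_add]
      abel
  have h3 := LinearMap.congr_fun C.coassoc c
  simp only [LinearMap.comp_apply, LinearEquiv.coe_coe] at h3
  rw [h1, h3, h2]
  abel

theorem coD_sq (dP : P →ₗ[ℚ] P) (hd : ∀ x, dP (dP x) = 0)
    (T : C.carrier →ₗ[ℚ] P →ₗ[ℚ] P) (hT : MC C dP T) (x : C.carrier ⊗[ℚ] P) :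
    coD C dP T (coD C dP T x) = 0 := by
  induction x with
  | zero => simp
  | add x y hx hy => simp only [map_add, hx, hy, add_zero]
  | tmul c p =>
    have hdd : C.d (C.d c) = 0 := LinearMap.congr_fun C.d_sq c
    have hch := LinearMap.congr_fun C.comul_chain c
    simp only [LinearMap.comp_apply, LinearMap.add_apply] at hch
    rw [coD_tmul, map_add, map_add, coD_tmul, coD_tmul, coD_theta dP T hT, hdd, hd, hch,
      parity_comul]
    have e := parity_d C.toDGVect c
    rw [e]
    have h : ∀ x : C.carrier ⊗[ℚ] C.carrier,
        TensorProduct.map (parityOf C.grading) (T.flip p)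
          (TensorProduct.map C.d LinearMap.id x + TensorProduct.map (parityOf C.grading) C.d x)
        + TensorProduct.map (parityOf C.grading) (T.flip (dP p))
          (TensorProduct.map (parityOf C.grading) (parityOf C.grading) x)
        + (TensorProduct.map (C.d.comp (parityOf C.grading)) (T.flip p) x
        - TensorProduct.map LinearMap.id ((T.flip p).comp C.d) x
        - TensorProduct.map LinearMap.id ((T.flip (dP p)).comp (parityOf C.grading)) x) = 0 := by
      intro x
      induction x with
      | zero => simp
      | add x y hx hy =>
        have := congrArg₂ (· + ·) hx hy
        simp only [add_zero] at this
        simp only [map_add] at this ⊢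
        rw [← this]
        abel
      | tmul u v =>
        have e := parity_d C.toDGVect u
        simp only [map_add, map_tmul, LinearMap.id_apply, LinearMap.comp_apply,
          LinearMap.flip_apply, parity_parity, e, neg_tmul]
        abel
    rw [← h (C.comul c)]
    simp only [zero_tmul, tmul_zero, neg_tmul]
    abel

theorem parity_mem {V : Type} [AddCommGroup V] [Module ℚ V] (g : ℤ → Submodule ℚ V)
    [DirectSum.Decomposition g] {n : ℤ} {x : V} (hx : x ∈ g n) : parityOf g x ∈ g n := by
  rw [parityOf_of_mem g hx]; exact Submodule.smul_mem _ _ hx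

theorem coext_acyclic (dP : P →ₗ[ℚ] P) (hd : ∀ x, dP (dP x) = 0)
    (T : C.carrier →ₗ[ℚ] P →ₗ[ℚ] P) (hT : MC C dP T)
    (hT0 : ∀ i ≤ 1, ∀ c ∈ C.grading i, T c = 0)
    (hac : ∀ x, dP x = 0 → ∃ z, x = dP z)
    (x : C.carrier ⊗[ℚ] P) (hx : coD C dP T x = 0) : ∃ z, x = coD C dP T z := by
  obtain ⟨h, hh⟩ := exists_contraction dP hd hac
  have hth : ∀ (y : P) n, ∀ c ∈ C.grading n,
      TensorProduct.map (parityOf C.grading) (T.flip y) (C.comul c)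
        ∈ filtL (W := P) C.grading (n - 1) := by
    intro y n c hc
    refine tg_ind (p := fun z => TensorProduct.map (parityOf C.grading) (T.flip y) z
        ∈ filtL (W := P) C.grading (n - 1)) (by simp)
      (fun x y hx hy => by rw [map_add]; exact Submodule.add_mem _ hx hy) ?_ _
      (C.comul_mem n c hc)
    intro i j hij u hu v hv
    rw [map_tmul, LinearMap.flip_apply]
    by_cases hi : j ≤ 1
    · simp [hT0 j hi v hv]
    · exact tmul_mem_filtL (by omega) (parity_mem _ hu) _
  have hH : ∀ p, ∀ y ∈ filtL (W := P) C.grading p,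
      TensorProduct.map (parityOf C.grading) h y ∈ filtL (W := P) C.grading p := by
    intro p y hy
    refine Submodule.span_induction (p := fun y _ => TensorProduct.map (parityOf C.grading) h y
      ∈ filtL (W := P) C.grading p) ?_ (by simp)
      (fun x y _ _ hx hy => by rw [map_add]; exact Submodule.add_mem _ hx hy)
      (fun r x _ hx => by rw [map_smul]; exact Submodule.smul_mem _ _ hx) hy
    rintro _ ⟨i, hi, c, hc, w, rfl⟩
    exact tmul_mem_filtL hi (parity_mem _ hc) _
  refine filtered_acyclic (coD C dP T) (coD_sq dP hd T hT)
    (TensorProduct.map (parityOf C.grading) h) (filtL C.grading) 0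
    (filtL_bot C.grading C.nonneg) (filtL_exh C.grading) ?_ x hx
  intro p y hy
  refine Submodule.span_induction (p := fun y _ => y - coD C dP T
      (TensorProduct.map (parityOf C.grading) h y)
      - TensorProduct.map (parityOf C.grading) h (coD C dP T y)
      ∈ filtL (W := P) C.grading (p - 1)) ?_ (by simp)
      (fun x y _ _ hx hy => by
        simp only [map_add]
        convert Submodule.add_mem _ hx hy using 1
        abel)
      (fun r x _ hx => by
        simp only [map_smul, ← smul_sub]; exact Submodule.smul_mem _ _ hx) hy
  rintro _ ⟨i, hi, c, hc, w, rfl⟩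
  have e : c ⊗ₜ w - coD C dP T (TensorProduct.map (parityOf C.grading) h (c ⊗ₜ w))
      - TensorProduct.map (parityOf C.grading) h (coD C dP T (c ⊗ₜ w))
      = - TensorProduct.map (parityOf C.grading) (T.flip (h w))
            (C.comul (parityOf C.grading c)) - TensorProduct.map (parityOf C.grading) h
          (TensorProduct.map (parityOf C.grading) (T.flip w) (C.comul c)) := by
    simp only [map_tmul, coD_tmul, map_add, parity_parity]
    have e1 := parity_d C.toDGVect c
    rw [e1, neg_tmul]
    nth_rw 1 [← hh w]
    rw [tmul_add]
    abel
  rw [e]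
  refine Submodule.sub_mem _ (Submodule.neg_mem _ (filtL_mono _ (by omega)
    (hth _ _ _ (parity_mem _ hc)))) ?_
  exact filtL_mono _ (by omega) (hH _ _ (hth _ _ _ hc))

/-! ### The twisted extension as a module -/

variable {A : DGAlgebra} (τ : TwistingChain C A) {K : Type} [AddCommGroup K] [Module ℚ K]

/-- `c ⊗ (a ⊗ k) ↦ τ c · a ⊗ k` -/
def extT (K : Type) [AddCommGroup K] [Module ℚ K] :
    C.carrier →ₗ[ℚ] (A.carrier ⊗[ℚ] K) →ₗ[ℚ] (A.carrier ⊗[ℚ] K) :=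
  (LinearMap.rTensorHom K).comp (A.mul.comp τ.toFun)

theorem extT_tmul (c : C.carrier) (a : A.carrier) (k : K) :
    extT τ K c (a ⊗ₜ k) = A.mul (τ.toFun c) a ⊗ₜ k := by
  simp [extT]

theorem extT_psi (c : C.carrier) (b : A.carrier) (y : C.carrier ⊗[ℚ] K) :
    extT τ K c (psi τ K b y) = psi τ K (A.mul (τ.toFun c) b) y := by
  induction y with
  | zero => simp
  | add x y hx hy => simp only [map_add, hx, hy]
  | tmul u k => simp [psi_tmul, extT_tmul, A.mul_assoc']

theorem ext_MC (dK : K →ₗ[ℚ] K) (ρ : K →ₗ[ℚ] C.carrier ⊗[ℚ] K) :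
    MC C (extDiff C A τ K dK ρ) (extT τ K) := by
  intro c p
  induction p with
  | zero =>
    have h : (extT τ K).flip 0 = 0 := map_zero _
    have h' : ((extT τ K).comp (parityOf C.grading)).compl₂
        (0 : C.carrier →ₗ[ℚ] A.carrier ⊗[ℚ] K) = 0 := by
      ext
      simp
    have h2 : TensorProduct.lift
        (0 : C.carrier →ₗ[ℚ] C.carrier →ₗ[ℚ] A.carrier ⊗[ℚ] K) = 0 :=
      TensorProduct.ext' (by simp)
    rw [h, h', h2]
    simp
  | add x y hx hy =>
    have h : ∀ z : C.carrier ⊗[ℚ] C.carrier,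
        TensorProduct.lift (((extT τ K).comp (parityOf C.grading)).compl₂
          ((extT τ K).flip (x + y))) z
        = TensorProduct.lift (((extT τ K).comp (parityOf C.grading)).compl₂
          ((extT τ K).flip x)) z + TensorProduct.lift (((extT τ K).comp
          (parityOf C.grading)).compl₂ ((extT τ K).flip y)) z := by
      intro z
      induction z with
      | zero => simp
      | add x y hx hy => rw [map_add, hx, hy, map_add, map_add]; abel
      | tmul u v => simp
    have := congrArg₂ (· + ·) hx hy
    simp only [add_zero] at this
    rw [h, ← this]
    simp only [map_add]
    abel
  | tmul a k =>
    have h : ∀ z : C.carrier ⊗[ℚ] C.carrier,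
        TensorProduct.lift (((extT τ K).comp (parityOf C.grading)).compl₂
          ((extT τ K).flip (a ⊗ₜ k))) z
        = A.mul (A.mulMap (TensorProduct.map (τ.toFun.comp (parityOf C.grading)) τ.toFun z)) a
            ⊗ₜ k := by
      intro z
      induction z with
      | zero => simp
      | add x y hx hy => simp only [map_add, hx, hy, LinearMap.add_apply, add_tmul]
      | tmul u v => simp [extT_tmul, DGAlgebra.mulMap, A.mul_assoc']
    have ht := LinearMap.congr_fun τ.twist c
    simp only [LinearMap.add_apply, LinearMap.comp_apply, LinearMap.zero_apply] at ht
    rw [h, eq_neg_of_add_eq_zero_right ht]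
    simp only [extT_tmul, extDiff_tmul, map_add, map_sub, extT_psi, alg_leibniz, alg_parity_mul,
      tau_parity, map_neg, LinearMap.neg_apply, LinearMap.add_apply, neg_tmul, add_tmul, psi_neg]
    abel

theorem acyclic_of_ext_acyclic (hτ : ∀ i ≤ 1, ∀ c ∈ C.grading i, τ.toFun c = 0)
    (aug : A.carrier →ₗ[ℚ] ℚ) (haug1 : aug A.one = 1)
    (haugm : ∀ x y, aug (A.mul x y) = aug x * aug y) (haugt : ∀ c, aug (τ.toFun c) = 0)
    (haugd : ∀ a, aug (A.d a) = 0) (haug0 : ∀ n ≠ 0, ∀ a ∈ A.grading n, aug a = 0)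
    (dK : K →ₗ[ℚ] K)
    (hd : ∀ x, dK (dK x) = 0) (ρ : K →ₗ[ℚ] C.carrier ⊗[ℚ] K)
    (hρ : (TensorProduct.assoc ℚ C.carrier C.carrier K).toLinearMap.comp
      ((TensorProduct.map C.comul LinearMap.id).comp ρ)
      = (TensorProduct.map LinearMap.id ρ).comp ρ)
    (hcu : (TensorProduct.lid ℚ K).toLinearMap.comp
      ((TensorProduct.map C.counit LinearMap.id).comp ρ) = LinearMap.id)
    (hch : ρ.comp dK
      = (TensorProduct.map C.d LinearMap.id + TensorProduct.map (parityOf C.grading) dK).comp ρ)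
    (hac : ∀ x, extDiff C A τ K dK ρ x = 0 → ∃ z, x = extDiff C A τ K dK ρ z)
    (x : K) (hx : dK x = 0) : ∃ z, x = dK z := by
  have haugp : ∀ a, aug (parityOf A.grading a) = aug a := by
    intro x
    induction x using hom_ind A.grading with
    | h0 => simp
    | hh n x hx =>
      rw [parityOf_of_mem _ hx, map_smul]
      by_cases hn : n = 0
      · simp [hn]
      · simp [haug0 n hn x hx]
    | ha x y hx hy => simp only [map_add, hx, hy]
  let dP := extDiff C A τ K dK ρ
  let D := coD C dP (extT τ K)
  let i : C.carrier ⊗[ℚ] K →ₗ[ℚ] C.carrier ⊗[ℚ] (A.carrier ⊗[ℚ] K) :=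
    TensorProduct.map LinearMap.id (TensorProduct.mk ℚ A.carrier K A.one)
  let r₀ : A.carrier ⊗[ℚ] K →ₗ[ℚ] K :=
    (TensorProduct.lid ℚ K).toLinearMap.comp (TensorProduct.map aug LinearMap.id)
  let r : C.carrier ⊗[ℚ] (A.carrier ⊗[ℚ] K) →ₗ[ℚ] K :=
    (TensorProduct.lid ℚ K).toLinearMap.comp (TensorProduct.map C.counit r₀)
  have hr₀psi : ∀ b (y : C.carrier ⊗[ℚ] K), r₀ (psi τ K b y) = 0 := by
    intro b y
    induction y with
    | zero => simp
    | add x y hx hy => simp only [map_add, hx, hy, add_zero]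
    | tmul u k => simp [psi_tmul, r₀, haugm, haugt]
  have hr₀d : ∀ p, r₀ (dP p) = dK (r₀ p) := by
    intro p
    induction p with
    | zero => simp
    | add x y hx hy => simp only [map_add, hx, hy]
    | tmul a k =>
      simp only [dP, extDiff_tmul, map_sub, map_add, hr₀psi]
      simp [r₀, haugd, haugp]
  have hr₀T : ∀ c p, r₀ (extT τ K c p) = 0 := by
    intro c p
    induction p with
    | zero => simp
    | add x y hx hy => simp only [map_add, hx, hy, add_zero]
    | tmul a k => simp [extT_tmul, r₀, haugm, haugt]
  have hrD : ∀ y, r (D y) = dK (r y) := by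
    intro y
    induction y with
    | zero => simp
    | add x y hx hy => simp only [map_add, hx, hy]
    | tmul c p =>
      have h1 : ∀ z, r (TensorProduct.map (parityOf C.grading) ((extT τ K).flip p) z) = 0 := by
        intro z
        induction z with
        | zero => simp
        | add x y hx hy => simp only [map_add, hx, hy, add_zero]
        | tmul u v => simp [r, hr₀T]
      have h2 : C.counit (C.d c) = 0 := LinearMap.congr_fun C.counit_chain c
      simp only [D, coD_tmul, map_add, h1]
      simp [r, h2, parity_counit, hr₀d]
  have hri : ∀ k, r (i (ρ k)) = k := by
    intro k
    have h1 : ∀ y, r (i y) = TensorProduct.lid ℚ K (TensorProduct.map C.counit LinearMap.id y) := by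
      intro y
      induction y with
      | zero => simp
      | add x y hx hy => simp only [map_add, hx, hy]
      | tmul c p => simp [r, i, r₀, haug1]
    rw [h1]
    exact LinearMap.congr_fun hcu k
  have hDi : ∀ k, D (i (ρ k)) = i (ρ (dK k)) := by
    intro k
    -- the twisting terms
    let Z : C.carrier ⊗[ℚ] (C.carrier ⊗[ℚ] K) →ₗ[ℚ] C.carrier ⊗[ℚ] (A.carrier ⊗[ℚ] K) :=
      TensorProduct.map (parityOf C.grading) (TensorProduct.map τ.toFun LinearMap.id)
    have h1 : ∀ (c : C.carrier) (k : K) (z : C.carrier ⊗[ℚ] C.carrier), TensorProduct.map (parityOf C.grading)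
          ((extT τ K).flip (A.one ⊗ₜ[ℚ] k)) z
        = Z (TensorProduct.assoc ℚ C.carrier C.carrier K (z ⊗ₜ[ℚ] k)) := by
      intro c k z
      induction z with
      | zero => simp
      | add x y hx hy => simp only [map_add, hx, hy, add_tmul]
      | tmul u v => simp [Z, extT_tmul, A.mul_one']
    have h2 : ∀ y : C.carrier ⊗[ℚ] K, psi τ K A.one y
        = TensorProduct.map τ.toFun LinearMap.id y := by
      intro y
      induction y with
      | zero => simp
      | add x y hx hy => simp only [map_add, hx, hy]
      | tmul u v => simp [psi_tmul, A.one_mul']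
    have h3 : ∀ y : C.carrier ⊗[ℚ] K, D (i y)
        = i (TensorProduct.map C.d LinearMap.id y + TensorProduct.map (parityOf C.grading) dK y)
          - Z (TensorProduct.map LinearMap.id ρ y)
          + Z (TensorProduct.assoc ℚ C.carrier C.carrier K
              (TensorProduct.map C.comul LinearMap.id y)) := by
      intro y
      induction y with
      | zero => simp
      | add x y hx hy => simp only [map_add, hx, hy]; abel
      | tmul c k =>
        simp only [i, D, dP, map_tmul, mk_apply, LinearMap.id_apply, coD_tmul, h1 c, map_add,
          extDiff_tmul, alg_d_one, alg_parity_one, h2, zero_tmul, zero_add, tmul_sub, Z]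
        abel
    have h4 := LinearMap.congr_fun hρ k
    have h5 := LinearMap.congr_fun hch k
    simp only [LinearMap.comp_apply, LinearEquiv.coe_coe, LinearMap.add_apply] at h4 h5
    rw [h3, h4, h5]
    abel
  obtain ⟨z, hz⟩ := coext_acyclic dP (extDiff_sq τ dK hd ρ hρ hch) (extT τ K) (ext_MC τ dK ρ)
    (fun j hj c hc => by
      ext a k
      simp [extT, hτ j hj c hc]) hac (i (ρ x)) (by
      have := hDi x
      rw [hx, map_zero, map_zero] at this
      exact this)
  refine ⟨r z, ?_⟩
  rw [← hrD, ← hri x, hz]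

end Coext

section Final

open TensorProduct

/-! ### The augmentation of the cobar construction -/

/-- `ℚ` concentrated in degree zero -/
def ratGr (n : ℤ) : Submodule ℚ ℚ := if n = 0 then ⊤ else ⊥

theorem ratGr_zero : ratGr 0 = ⊤ := by simp [ratGr]

theorem ratGr_ne {n : ℤ} (h : n ≠ 0) : ratGr n = ⊥ := by simp [ratGr, h]

instance : DirectSum.Decomposition ratGr :=
  DirectSum.Decomposition.ofLinearMap ratGr
    ((DirectSum.lof ℚ ℤ (fun i => ratGr i) 0).comp
      (LinearMap.codRestrict (ratGr 0) LinearMap.id (fun x => by simp [ratGr_zero])))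
    (by
      refine LinearMap.ext fun x => ?_
      simp)
    (by
      refine DirectSum.linearMap_ext ℚ fun i => LinearMap.ext fun x => ?_
      by_cases h : i = 0
      · subst h
        simp only [LinearMap.comp_apply, DirectSum.coeLinearMap_lof, LinearMap.id_apply]
        rfl
      · obtain ⟨x, hx⟩ := x
        have hx' := hx
        rw [ratGr_ne h, Submodule.mem_bot] at hx'
        subst hx'
        have : (⟨0, hx⟩ : ratGr i) = 0 := rfl
        rw [this]
        simp)

/-- The dg algebra `ℚ`. -/
def ratAlg : DGAlgebra where
  carrier := ℚ
  grading := ratGr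
  d := 0
  d_mem := fun n x _ => by simp
  d_sq := by simp
  mul := LinearMap.mul ℚ ℚ
  one := 1
  one_mem := by simp [ratGr_zero]
  mul_mem := by
    intro i j x y hx hy
    by_cases hi : i = 0
    · by_cases hj : j = 0
      · simp [hi, hj, ratGr_zero]
      · rw [ratGr_ne hj, Submodule.mem_bot] at hy
        simp [hy]
    · rw [ratGr_ne hi, Submodule.mem_bot] at hx
      simp [hx]
  mul_assoc' := by intro x y z; simp [mul_assoc]
  one_mul' := by intro x; simp
  mul_one' := by intro x; simp
  leibniz := by intro i x y _; simp

theorem exists_aug (C : CoaugDGCoalgebra) (Ω : CobarData C) :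
    ∃ aug : Ω.alg.carrier →ₗ[ℚ] ℚ, aug Ω.alg.one = 1 ∧
      (∀ x y, aug (Ω.alg.mul x y) = aug x * aug y) ∧ (∀ c, aug (Ω.t.toFun c) = 0) ∧
      (∀ a, aug (Ω.alg.d a) = 0) ∧ (∀ n ≠ 0, ∀ a ∈ Ω.alg.grading n, aug a = 0) := by
  let z : TwistingChain C.toDGCoalgebra ratAlg :=
    { toFun := 0
      mem := fun n x _ => Submodule.zero_mem _
      twist := by ext; simp }
  obtain ⟨F, hF, _⟩ := Ω.univ ratAlg z rfl
  refine ⟨F.toLinearMap, F.map_one, F.map_mul, fun c => LinearMap.congr_fun hF c,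
    fun a => LinearMap.congr_fun F.chain a, fun n hn a ha => ?_⟩
  have h : F.toLinearMap a ∈ ratGr n := F.mem n a ha
  rw [ratGr_ne hn] at h
  exact h

/-! ### The cone -/

section coneGr
variable {V W : Type} [AddCommGroup V] [Module ℚ V] [AddCommGroup W] [Module ℚ W]

/-- the grading of the cone -/
def coneGr (g : ℤ → Submodule ℚ V) (g' : ℤ → Submodule ℚ W) (n : ℤ) : Submodule ℚ (V × W) :=
  (g (n - 1)).prod (g' n)

theorem mem_coneGr {g : ℤ → Submodule ℚ V} {g' : ℤ → Submodule ℚ W} {n : ℤ} {x : V × W} :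
    x ∈ coneGr g g' n ↔ x.1 ∈ g (n - 1) ∧ x.2 ∈ g' n := Submodule.mem_prod

/-- the inclusion of the shifted first factor, by degree -/
def coneInl (g : ℤ → Submodule ℚ V) (g' : ℤ → Submodule ℚ W) (n : ℤ) :
    g n →ₗ[ℚ] coneGr g g' (n + 1) :=
  LinearMap.codRestrict _ ((LinearMap.inl ℚ V W).comp (g n).subtype)
    (fun x => mem_coneGr.2 ⟨by simp, by simp⟩)

/-- the inclusion of the second factor, by degree -/
def coneInr (g : ℤ → Submodule ℚ V) (g' : ℤ → Submodule ℚ W) (n : ℤ) :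
    g' n →ₗ[ℚ] coneGr g g' n :=
  LinearMap.codRestrict _ ((LinearMap.inr ℚ V W).comp (g' n).subtype)
    (fun x => mem_coneGr.2 ⟨by simp, by simp⟩)

/-- the decomposition map of the cone -/
def coneDec (g : ℤ → Submodule ℚ V) (g' : ℤ → Submodule ℚ W) [DirectSum.Decomposition g]
    [DirectSum.Decomposition g'] : V × W →ₗ[ℚ] DirectSum ℤ (fun i => coneGr g g' i) :=
  LinearMap.coprod
    ((DirectSum.toModule ℚ ℤ _ (fun n => (DirectSum.lof ℚ ℤ (fun i => coneGr g g' i) (n + 1)).comp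
      (coneInl g g' n))).comp (DirectSum.decomposeLinearEquiv g).toLinearMap)
    ((DirectSum.toModule ℚ ℤ _ (fun n => (DirectSum.lof ℚ ℤ (fun i => coneGr g g' i) n).comp
      (coneInr g g' n))).comp (DirectSum.decomposeLinearEquiv g').toLinearMap)

theorem coneDec_inl (g : ℤ → Submodule ℚ V) (g' : ℤ → Submodule ℚ W) [DirectSum.Decomposition g]
    [DirectSum.Decomposition g'] {n : ℤ} {x : V} (hx : x ∈ g n) :
    coneDec g g' (x, 0) = DirectSum.lof ℚ ℤ (fun i => coneGr g g' i) (n + 1)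
      (coneInl g g' n ⟨x, hx⟩) := by
  have h : DirectSum.decompose g x = DirectSum.of (fun i => g i) n ⟨x, hx⟩ :=
    DirectSum.decompose_of_mem g hx
  simp only [coneDec, LinearMap.coprod_apply, LinearMap.comp_apply, LinearEquiv.coe_coe,
    DirectSum.decomposeLinearEquiv_apply, h, map_zero, add_zero]
  erw [DirectSum.toModule_lof]
  simp

theorem coneDec_inr (g : ℤ → Submodule ℚ V) (g' : ℤ → Submodule ℚ W) [DirectSum.Decomposition g]
    [DirectSum.Decomposition g'] {n : ℤ} {x : W} (hx : x ∈ g' n) :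
    coneDec g g' (0, x) = DirectSum.lof ℚ ℤ (fun i => coneGr g g' i) n
      (coneInr g g' n ⟨x, hx⟩) := by
  have h : DirectSum.decompose g' x = DirectSum.of (fun i => g' i) n ⟨x, hx⟩ :=
    DirectSum.decompose_of_mem g' hx
  simp only [coneDec, LinearMap.coprod_apply, LinearMap.comp_apply, LinearEquiv.coe_coe,
    DirectSum.decomposeLinearEquiv_apply, h, map_zero, zero_add]
  erw [DirectSum.toModule_lof]
  simp

theorem lof_congr (g : ℤ → Submodule ℚ V) {i j : ℤ} (h : i = j) (x : g i) (y : g j)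
    (hxy : (x : V) = y) :
    DirectSum.lof ℚ ℤ (fun i => g i) i x = DirectSum.lof ℚ ℤ (fun i => g i) j y := by
  subst h
  rw [Subtype.ext hxy]

instance coneDecomposition (g : ℤ → Submodule ℚ V) (g' : ℤ → Submodule ℚ W)
    [DirectSum.Decomposition g] [DirectSum.Decomposition g'] :
    DirectSum.Decomposition (coneGr g g') :=
  DirectSum.Decomposition.ofLinearMap (coneGr g g') (coneDec g g')
    (by
      have h1 : ∀ x : V, DirectSum.coeLinearMap (coneGr g g') (coneDec g g' (x, 0)) = (x, 0) := by
        intro x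
        induction x using hom_ind g with
        | h0 =>
          have : ((0 : V), (0 : W)) = 0 := rfl
          rw [this, map_zero, map_zero]
        | hh n x hx =>
          rw [coneDec_inl g g' hx, DirectSum.coeLinearMap_lof]
          rfl
        | ha x y hx hy =>
          have : ((x + y : V), (0 : W)) = (x, 0) + (y, 0) := by simp
          rw [this, map_add, map_add, hx, hy]
      have h2 : ∀ x : W, DirectSum.coeLinearMap (coneGr g g') (coneDec g g' (0, x)) = (0, x) := by
        intro x
        induction x using hom_ind g' with
        | h0 =>
          have : ((0 : V), (0 : W)) = 0 := rfl
          rw [this, map_zero, map_zero]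
        | hh n x hx =>
          rw [coneDec_inr g g' hx, DirectSum.coeLinearMap_lof]
          rfl
        | ha x y hx hy =>
          have : ((0 : V), (x + y : W)) = (0, x) + (0, y) := by simp
          rw [this, map_add, map_add, hx, hy]
      refine LinearMap.ext fun x => ?_
      obtain ⟨v, w⟩ := x
      have : (v, w) = (v, 0) + (0, w) := by simp
      rw [LinearMap.comp_apply, this, map_add, map_add, h1, h2]
      rfl)
    (by
      refine DirectSum.linearMap_ext ℚ fun i => LinearMap.ext fun x => ?_
      obtain ⟨⟨v, w⟩, hx⟩ := x
      obtain ⟨hv, hw⟩ := mem_coneGr.1 hx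
      simp only [LinearMap.comp_apply, DirectSum.coeLinearMap_lof, LinearMap.id_apply]
      have : coneDec g g' (v, w) = coneDec g g' (v, 0) + coneDec g g' (0, w) := by
        rw [← map_add]
        simp
      rw [this, coneDec_inl g g' hv, coneDec_inr g g' hw,
        lof_congr (coneGr g g') (sub_add_cancel i 1) (coneInl g g' (i - 1) ⟨v, hv⟩)
          ⟨(v, 0), mem_coneGr.2 ⟨hv, Submodule.zero_mem _⟩⟩ rfl, ← map_add]
      congr 1
      apply Subtype.ext
      simp [coneInr])

end coneGr

variable {C : DGCoalgebra} (N M : DGComodule C) (f : N.carrier →ₗ[ℚ] M.carrier)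

/-- the differential of the cone -/
def coneD : N.carrier × M.carrier →ₗ[ℚ] N.carrier × M.carrier :=
  LinearMap.coprod (LinearMap.prod (-N.d) f) (LinearMap.prod 0 M.d)

/-- the coaction of the cone -/
def coneRho : N.carrier × M.carrier →ₗ[ℚ] C.carrier ⊗[ℚ] (N.carrier × M.carrier) :=
  LinearMap.coprod
    ((TensorProduct.map (parityOf C.grading) (LinearMap.inl ℚ N.carrier M.carrier)).comp N.coact)
    ((TensorProduct.map LinearMap.id (LinearMap.inr ℚ N.carrier M.carrier)).comp M.coact)

theorem coneD_apply (n : N.carrier) (m : M.carrier) :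
    coneD N M f (n, m) = (-N.d n, f n + M.d m) := by
  simp [coneD]

theorem coneRho_inl (n : N.carrier) : coneRho N M (n, 0)
    = TensorProduct.map (parityOf C.grading) (LinearMap.inl ℚ N.carrier M.carrier)
      (N.coact n) := by
  simp [coneRho]

theorem coneRho_inr (m : M.carrier) : coneRho N M (0, m)
    = TensorProduct.map LinearMap.id (LinearMap.inr ℚ N.carrier M.carrier) (M.coact m) := by
  simp [coneRho]

theorem coneD_sq (hf : IsComoduleHom C N M f) (x : N.carrier × M.carrier) :
    coneD N M f (coneD N M f x) = 0 := by
  obtain ⟨n, m⟩ := x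
  have h1 : N.d (N.d n) = 0 := LinearMap.congr_fun N.d_sq n
  have h2 : M.d (M.d m) = 0 := LinearMap.congr_fun M.d_sq m
  have h3 : f (N.d n) = M.d (f n) := LinearMap.congr_fun hf.2.1 n
  simp [coneD_apply, h1, h2, h3]

theorem coneD_mem (hf : IsComoduleHom C N M f) (n : ℤ) (x : N.carrier × M.carrier)
    (hx : x ∈ coneGr N.grading M.grading n) :
    coneD N M f x ∈ coneGr N.grading M.grading (n - 1) := by
  obtain ⟨a, b⟩ := x
  obtain ⟨ha, hb⟩ := mem_coneGr.1 hx
  rw [coneD_apply]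
  exact mem_coneGr.2 ⟨Submodule.neg_mem _ (N.d_mem _ _ ha),
    Submodule.add_mem _ (hf.1 _ _ ha) (M.d_mem _ _ hb)⟩

theorem coneRho_mem (n : ℤ) (x : N.carrier × M.carrier)
    (hx : x ∈ coneGr N.grading M.grading n) :
    coneRho N M x ∈ tensorGrading C.grading (coneGr N.grading M.grading) n := by
  obtain ⟨a, b⟩ := x
  obtain ⟨ha, hb⟩ := mem_coneGr.1 hx
  have : (a, b) = (a, 0) + (0, b) := by simp
  rw [this, map_add, coneRho_inl, coneRho_inr]
  refine Submodule.add_mem _ ?_ ?_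
  · refine tg_ind (p := fun y => TensorProduct.map (parityOf C.grading)
      (LinearMap.inl ℚ N.carrier M.carrier) y
      ∈ tensorGrading C.grading (coneGr N.grading M.grading) n) (by simp)
      (fun x y hx hy => by rw [map_add]; exact Submodule.add_mem _ hx hy) ?_ _ (N.coact_mem _ a ha)
    intro i j hij c hc k hk
    rw [map_tmul]
    refine tmul_mem_tg (i := i) (j := j + 1) (by omega) (parity_mem _ hc) (mem_coneGr.2 ⟨?_, ?_⟩)
    · simpa using hk
    · simp
  · refine tg_ind (p := fun y => TensorProduct.map LinearMap.id
      (LinearMap.inr ℚ N.carrier M.carrier) y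
      ∈ tensorGrading C.grading (coneGr N.grading M.grading) n) (by simp)
      (fun x y hx hy => by rw [map_add]; exact Submodule.add_mem _ hx hy) ?_ _ (M.coact_mem _ b hb)
    intro i j hij c hc k hk
    rw [map_tmul]
    refine tmul_mem_tg (i := i) (j := j) hij hc (mem_coneGr.2 ⟨?_, ?_⟩)
    · simp
    · simpa using hk

theorem cone_ext {Z : Type} [AddCommGroup Z] [Module ℚ Z]
    {φ ψ : N.carrier × M.carrier →ₗ[ℚ] Z} (h1 : ∀ n, φ (n, 0) = ψ (n, 0))
    (h2 : ∀ m, φ (0, m) = ψ (0, m)) : φ = ψ := by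
  refine LinearMap.ext fun x => ?_
  obtain ⟨a, b⟩ := x
  have : (a, b) = (a, 0) + (0, b) := by simp
  rw [this, map_add, map_add, h1, h2]

theorem coneRho_coassoc :
    (TensorProduct.assoc ℚ C.carrier C.carrier (N.carrier × M.carrier)).toLinearMap.comp
      ((TensorProduct.map C.comul LinearMap.id).comp (coneRho N M))
      = (TensorProduct.map LinearMap.id (coneRho N M)).comp (coneRho N M) := by
  refine cone_ext N M (fun n => ?_) (fun m => ?_)
  · simp only [LinearMap.comp_apply, LinearEquiv.coe_coe, coneRho_inl]
    have h := LinearMap.congr_fun N.coassoc n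
    simp only [LinearMap.comp_apply, LinearEquiv.coe_coe] at h
    let Z : C.carrier ⊗[ℚ] (C.carrier ⊗[ℚ] N.carrier) →ₗ[ℚ]
        C.carrier ⊗[ℚ] (C.carrier ⊗[ℚ] (N.carrier × M.carrier)) :=
      TensorProduct.map (parityOf C.grading)
        (TensorProduct.map (parityOf C.grading) (LinearMap.inl ℚ N.carrier M.carrier))
    have h1 : ∀ y : C.carrier ⊗[ℚ] N.carrier,
        (TensorProduct.assoc ℚ C.carrier C.carrier (N.carrier × M.carrier))
          (TensorProduct.map C.comul LinearMap.id (TensorProduct.map (parityOf C.grading)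
            (LinearMap.inl ℚ N.carrier M.carrier) y))
        = Z (TensorProduct.assoc ℚ C.carrier C.carrier N.carrier
            (TensorProduct.map C.comul LinearMap.id y)) := by
      intro y
      induction y with
      | zero => simp
      | add x y hx hy => simp only [map_add, hx, hy]
      | tmul c n =>
        simp only [map_tmul, parity_comul, LinearMap.id_apply]
        generalize C.comul c = w
        induction w with
        | zero => simp
        | add x y hx hy => simp only [map_add, add_tmul, hx, hy]
        | tmul u v => simp [Z]
    have h2 : ∀ y : C.carrier ⊗[ℚ] N.carrier,
        TensorProduct.map LinearMap.id (coneRho N M) (TensorProduct.map (parityOf C.grading)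
            (LinearMap.inl ℚ N.carrier M.carrier) y)
        = Z (TensorProduct.map LinearMap.id N.coact y) := by
      intro y
      induction y with
      | zero => simp
      | add x y hx hy => simp only [map_add, hx, hy]
      | tmul c n =>
        simp only [map_tmul, LinearMap.id_apply, LinearMap.inl_apply, coneRho_inl, Z]
    rw [h1, h2, h]
  · simp only [LinearMap.comp_apply, LinearEquiv.coe_coe, coneRho_inr]
    have h := LinearMap.congr_fun M.coassoc m
    simp only [LinearMap.comp_apply, LinearEquiv.coe_coe] at h
    let Z : C.carrier ⊗[ℚ] (C.carrier ⊗[ℚ] M.carrier) →ₗ[ℚ]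
        C.carrier ⊗[ℚ] (C.carrier ⊗[ℚ] (N.carrier × M.carrier)) :=
      TensorProduct.map LinearMap.id
        (TensorProduct.map LinearMap.id (LinearMap.inr ℚ N.carrier M.carrier))
    have h1 : ∀ y : C.carrier ⊗[ℚ] M.carrier,
        (TensorProduct.assoc ℚ C.carrier C.carrier (N.carrier × M.carrier))
          (TensorProduct.map C.comul LinearMap.id (TensorProduct.map LinearMap.id
            (LinearMap.inr ℚ N.carrier M.carrier) y))
        = Z (TensorProduct.assoc ℚ C.carrier C.carrier M.carrier
            (TensorProduct.map C.comul LinearMap.id y)) := by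
      intro y
      induction y with
      | zero => simp
      | add x y hx hy => simp only [map_add, hx, hy]
      | tmul c n =>
        simp only [map_tmul, LinearMap.id_apply]
        generalize C.comul c = w
        induction w with
        | zero => simp
        | add x y hx hy => simp only [map_add, add_tmul, hx, hy]
        | tmul u v => simp [Z]
    have h2 : ∀ y : C.carrier ⊗[ℚ] M.carrier,
        TensorProduct.map LinearMap.id (coneRho N M) (TensorProduct.map LinearMap.id
            (LinearMap.inr ℚ N.carrier M.carrier) y)
        = Z (TensorProduct.map LinearMap.id M.coact y) := by
      intro y
      induction y with
      | zero => simp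
      | add x y hx hy => simp only [map_add, hx, hy]
      | tmul c n =>
        simp only [map_tmul, LinearMap.id_apply, LinearMap.inr_apply, coneRho_inr, Z]
    rw [h1, h2, h]

theorem coneRho_counit : (TensorProduct.lid ℚ (N.carrier × M.carrier)).toLinearMap.comp
      ((TensorProduct.map C.counit LinearMap.id).comp (coneRho N M)) = LinearMap.id := by
  refine cone_ext N M (fun n => ?_) (fun m => ?_)
  · simp only [LinearMap.comp_apply, LinearEquiv.coe_coe, coneRho_inl, LinearMap.id_apply]
    have h1 : ∀ y : C.carrier ⊗[ℚ] N.carrier,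
        TensorProduct.lid ℚ (N.carrier × M.carrier) (TensorProduct.map C.counit LinearMap.id
          (TensorProduct.map (parityOf C.grading) (LinearMap.inl ℚ N.carrier M.carrier) y))
        = (TensorProduct.lid ℚ N.carrier (TensorProduct.map C.counit LinearMap.id y), 0) := by
      intro y
      induction y with
      | zero => simp only [map_zero]; rfl
      | add x y hx hy => simp only [map_add, hx, hy]; simp
      | tmul c n => simp [parity_counit]
    rw [h1]
    have h := LinearMap.congr_fun N.counit_coact n
    simp only [LinearMap.comp_apply, LinearEquiv.coe_coe, LinearMap.id_apply] at h
    rw [h]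
  · simp only [LinearMap.comp_apply, LinearEquiv.coe_coe, coneRho_inr, LinearMap.id_apply]
    have h1 : ∀ y : C.carrier ⊗[ℚ] M.carrier,
        TensorProduct.lid ℚ (N.carrier × M.carrier) (TensorProduct.map C.counit LinearMap.id
          (TensorProduct.map LinearMap.id (LinearMap.inr ℚ N.carrier M.carrier) y))
        = (0, TensorProduct.lid ℚ M.carrier (TensorProduct.map C.counit LinearMap.id y)) := by
      intro y
      induction y with
      | zero => simp only [map_zero]; rfl
      | add x y hx hy => simp only [map_add, hx, hy]; simp
      | tmul c n => simp
    rw [h1]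
    have h := LinearMap.congr_fun M.counit_coact m
    simp only [LinearMap.comp_apply, LinearEquiv.coe_coe, LinearMap.id_apply] at h
    rw [h]

theorem coneRho_chain (hf : IsComoduleHom C N M f) : (coneRho N M).comp (coneD N M f)
      = (TensorProduct.map C.d LinearMap.id
          + TensorProduct.map (parityOf C.grading) (coneD N M f)).comp (coneRho N M) := by
  refine cone_ext N M (fun n => ?_) (fun m => ?_)
  · have e : ((-N.d n, f n + M.d 0) : N.carrier × M.carrier) = -(N.d n, 0) + (0, f n) := by simp
    have h := LinearMap.congr_fun N.coact_chain n
    have h' := LinearMap.congr_fun hf.2.2 n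
    simp only [LinearMap.comp_apply, LinearMap.add_apply] at h h'
    rw [LinearMap.comp_apply, LinearMap.comp_apply, coneD_apply, e, map_add, map_neg, coneRho_inl,
      coneRho_inr, coneRho_inl, h, ← h']
    generalize N.coact n = y
    rw [LinearMap.add_apply]
    induction y with
    | zero => simp
    | add x y hx hy =>
      have := congrArg₂ (· + ·) hx hy
      simp only [map_add] at this ⊢
      convert this using 1 <;> abel
    | tmul c k =>
      have e1 := parity_d C.toDGVect c
      have e2 : ((-N.d k, f k + M.d 0) : N.carrier × M.carrier) = -(N.d k, 0) + (0, f k) := by simp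
      simp only [map_add, map_tmul, LinearMap.id_apply, LinearMap.inl_apply, LinearMap.inr_apply,
        parity_parity, coneD_apply, e1, e2, tmul_add, tmul_neg, neg_tmul]
      abel
  · have e : ((-N.d 0, f 0 + M.d m) : N.carrier × M.carrier) = (0, M.d m) := by simp
    have h := LinearMap.congr_fun M.coact_chain m
    simp only [LinearMap.comp_apply, LinearMap.add_apply] at h
    rw [LinearMap.comp_apply, LinearMap.comp_apply, coneD_apply, e, coneRho_inr, coneRho_inr, h]
    generalize M.coact m = y
    rw [LinearMap.add_apply]
    induction y with
    | zero => simp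
    | add x y hx hy =>
      have := congrArg₂ (· + ·) hx hy
      simp only [map_add] at this ⊢
      convert this using 1 <;> abel
    | tmul c k =>
      have e2 : ((-N.d 0, f 0 + M.d k) : N.carrier × M.carrier) = (0, M.d k) := by simp
      simp only [map_add, map_tmul, LinearMap.id_apply, LinearMap.inr_apply, coneD_apply, e2]

theorem quasiIso_iff_coneD (hf : IsComoduleHom C N M f) :
    IsQuasiIso N.d M.d f ↔ ∀ x, coneD N M f x = 0 → ∃ z, x = coneD N M f z := by
  rw [isQuasiIso_iff_cone _ _ _ (fun x => LinearMap.congr_fun hf.2.1 x)]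
  constructor
  · rintro h ⟨v, w⟩ hx
    rw [coneD_apply, Prod.mk_eq_zero] at hx
    obtain ⟨v', w', h1, h2⟩ := h v w (by simpa using hx.1) hx.2
    exact ⟨(v', w'), by rw [coneD_apply, ← h1, ← h2]⟩
  · intro h v w hv hw
    obtain ⟨⟨v', w'⟩, h1⟩ := h (v, w) (by rw [coneD_apply, hv, hw]; simp)
    rw [coneD_apply, Prod.mk.injEq] at h1
    exact ⟨v', w', h1.1, h1.2⟩

section transport

variable {A : DGAlgebra} (τ : TwistingChain C A)

/-- twisted inclusion of the first factor -/
def jN : A.carrier ⊗[ℚ] N.carrier →ₗ[ℚ] A.carrier ⊗[ℚ] (N.carrier × M.carrier) :=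
  TensorProduct.map (parityOf A.grading) (LinearMap.inl ℚ N.carrier M.carrier)

/-- inclusion of the second factor -/
def jM : A.carrier ⊗[ℚ] M.carrier →ₗ[ℚ] A.carrier ⊗[ℚ] (N.carrier × M.carrier) :=
  TensorProduct.map LinearMap.id (LinearMap.inr ℚ N.carrier M.carrier)

/-- twisted projection to the first factor -/
def qN : A.carrier ⊗[ℚ] (N.carrier × M.carrier) →ₗ[ℚ] A.carrier ⊗[ℚ] N.carrier :=
  TensorProduct.map (parityOf A.grading) (LinearMap.fst ℚ N.carrier M.carrier)

/-- projection to the second factor -/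
def qM : A.carrier ⊗[ℚ] (N.carrier × M.carrier) →ₗ[ℚ] A.carrier ⊗[ℚ] M.carrier :=
  TensorProduct.map LinearMap.id (LinearMap.snd ℚ N.carrier M.carrier)

theorem qN_jN (x : A.carrier ⊗[ℚ] N.carrier) : qN N M (jN N M x) = x := by
  induction x with
  | zero => simp
  | add x y hx hy => simp only [map_add, hx, hy]
  | tmul a k => simp [qN, jN, parity_parity]

theorem qM_jN (x : A.carrier ⊗[ℚ] N.carrier) : qM N M (jN N M x) = 0 := by
  induction x with
  | zero => simp
  | add x y hx hy => simp only [map_add, hx, hy, add_zero]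
  | tmul a k => simp [qM, jN]

theorem qN_jM (x : A.carrier ⊗[ℚ] M.carrier) : qN N M (jM N M x) = 0 := by
  induction x with
  | zero => simp
  | add x y hx hy => simp only [map_add, hx, hy, add_zero]
  | tmul a k => simp [qN, jM]

theorem qM_jM (x : A.carrier ⊗[ℚ] M.carrier) : qM N M (jM N M x) = x := by
  induction x with
  | zero => simp
  | add x y hx hy => simp only [map_add, hx, hy]
  | tmul a k => simp [qM, jM]

theorem j_q (x : A.carrier ⊗[ℚ] (N.carrier × M.carrier)) :
    jN N M (qN N M x) + jM N M (qM N M x) = x := by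
  induction x with
  | zero => simp
  | add x y hx hy =>
    nth_rw 3 [← hx]
    nth_rw 3 [← hy]
    simp only [map_add]
    abel
  | tmul a k => simp [jN, qN, jM, qM, parity_parity, ← tmul_add]

theorem D_jM (x : A.carrier ⊗[ℚ] M.carrier) :
    extDiff C A τ _ (coneD N M f) (coneRho N M) (jM N M x)
      = jM N M (extDiff C A τ _ M.d M.coact x) := by
  induction x with
  | zero => simp
  | add x y hx hy => simp only [map_add, hx, hy]
  | tmul a k =>
    have h : ∀ b (y : C.carrier ⊗[ℚ] M.carrier),
        psi τ _ b (TensorProduct.map LinearMap.id (LinearMap.inr ℚ N.carrier M.carrier) y)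
        = jM N M (psi τ _ b y) := by
      intro b y
      induction y with
      | zero => simp
      | add x y hx hy => simp only [map_add, hx, hy]
      | tmul c k => simp [psi_tmul, jM]
    have e2 : ((-N.d 0, f 0 + M.d k) : N.carrier × M.carrier) = (0, M.d k) := by simp
    have e3 : jM N M (a ⊗ₜ k) = a ⊗ₜ ((0, k) : N.carrier × M.carrier) := by simp [jM]
    rw [e3, extDiff_tmul, extDiff_tmul, coneD_apply, e2, coneRho_inr, h, map_sub, map_add]
    simp [jM]

theorem D_jN (x : A.carrier ⊗[ℚ] N.carrier) :
    extDiff C A τ _ (coneD N M f) (coneRho N M) (jN N M x)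
      = - jN N M (extDiff C A τ _ N.d N.coact x) + jM N M (TensorProduct.map LinearMap.id f x) := by
  induction x with
  | zero => simp
  | add x y hx hy => simp only [map_add, hx, hy]; abel
  | tmul a k =>
    have h : ∀ (y : C.carrier ⊗[ℚ] N.carrier),
        psi τ _ a (TensorProduct.map (parityOf C.grading)
          (LinearMap.inl ℚ N.carrier M.carrier) y)
        = - jN N M (psi τ _ (parityOf A.grading a) y) := by
      intro y
      induction y with
      | zero => simp
      | add x y hx hy => simp only [map_add, hx, hy]; abel
      | tmul c k => simp [psi_tmul, jN, alg_parity_mul, tau_parity, parity_parity, neg_tmul]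
    have e2 : ((-N.d k, f k + M.d 0) : N.carrier × M.carrier) = -(N.d k, 0) + (0, f k) := by simp
    have e3 : jN N M (a ⊗ₜ k) = parityOf A.grading a ⊗ₜ ((k, 0) : N.carrier × M.carrier) := by
      simp [jN]
    have e1 := parity_d A.toDGVect a
    rw [e3, extDiff_tmul, extDiff_tmul, coneD_apply, e2, coneRho_inl, parity_parity, h, map_sub,
      map_add]
    simp only [jN, jM, map_tmul, LinearMap.inl_apply, LinearMap.inr_apply, LinearMap.id_apply, e1,
      parity_parity, tmul_add, tmul_neg, neg_tmul]
    abel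

theorem ext_chain (hf : IsComoduleHom C N M f) (x : A.carrier ⊗[ℚ] N.carrier) :
    TensorProduct.map LinearMap.id f (extDiff C A τ _ N.d N.coact x)
      = extDiff C A τ _ M.d M.coact (TensorProduct.map LinearMap.id f x) := by
  induction x with
  | zero => simp
  | add x y hx hy => simp only [map_add, hx, hy]
  | tmul a k =>
    have h : ∀ b (y : C.carrier ⊗[ℚ] N.carrier),
        TensorProduct.map LinearMap.id f (psi τ _ b y)
        = psi τ _ b (TensorProduct.map LinearMap.id f y) := by
      intro b y
      induction y with
      | zero => simp
      | add x y hx hy => simp only [map_add, hx, hy]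
      | tmul c k => simp [psi_tmul]
    have h1 : f (N.d k) = M.d (f k) := LinearMap.congr_fun hf.2.1 k
    have h2 := LinearMap.congr_fun hf.2.2 k
    simp only [LinearMap.comp_apply] at h2
    rw [extDiff_tmul, map_sub, h, h2, map_tmul, extDiff_tmul]
    simp [h1]

theorem ext_quasiIso_iff (hf : IsComoduleHom C N M f) :
    IsQuasiIso (extDiff C A τ _ N.d N.coact) (extDiff C A τ _ M.d M.coact)
      (TensorProduct.map LinearMap.id f) ↔
    ∀ x, extDiff C A τ _ (coneD N M f) (coneRho N M) x = 0 →
      ∃ z, x = extDiff C A τ _ (coneD N M f) (coneRho N M) z := by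
  rw [isQuasiIso_iff_cone _ _ _ (ext_chain N M f τ hf)]
  have key : ∀ v w, extDiff C A τ _ (coneD N M f) (coneRho N M) (jN N M v + jM N M w)
      = jN N M (- extDiff C A τ _ N.d N.coact v)
        + jM N M (TensorProduct.map LinearMap.id f v + extDiff C A τ _ M.d M.coact w) := by
    intro v w
    rw [map_add, D_jN, D_jM, map_neg, map_add, add_assoc]
  have inj : ∀ {v w v' w'}, jN (A := A) N M v + jM N M w = jN N M v' + jM N M w' →
      v = v' ∧ w = w' := by
    intro v w v' w' h
    have h1 := congrArg (qN N M) h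
    have h2 := congrArg (qM N M) h
    simp only [map_add, qN_jN, qN_jM, qM_jN, qM_jM, add_zero, zero_add] at h1 h2
    exact ⟨h1, h2⟩
  constructor
  · intro h x hx
    rw [← j_q N M x, key] at hx
    obtain ⟨h1, h2⟩ := inj (v' := 0) (w' := 0) (by rw [hx]; simp)
    obtain ⟨v', w', h3, h4⟩ := h _ _ (by simpa using h1) h2
    refine ⟨jN N M v' + jM N M w', ?_⟩
    rw [key, ← h3, ← h4, j_q]
  · intro h v w hv hw
    obtain ⟨z, hz⟩ := h (jN N M v + jM N M w) (by rw [key, hv, hw]; simp)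
    rw [← j_q N M z, key] at hz
    obtain ⟨h1, h2⟩ := inj hz
    exact ⟨_, _, h1, h2⟩

end transport

theorem t_low (C : CoaugDGCoalgebra) (hred : C.TwoReduced) (Ω : CobarData C) :
    ∀ i ≤ 1, ∀ c ∈ C.grading i, Ω.t.toFun c = 0 := by
  intro i hi c hc
  rcases lt_or_ge i 0 with h | h
  · rw [C.nonneg i h, Submodule.mem_bot] at hc
    simp [hc]
  · obtain rfl | rfl : i = 0 ∨ i = 1 := by omega
    · rw [hred.1, Submodule.mem_span_singleton] at hc
      obtain ⟨r, rfl⟩ := hc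
      simp [Ω.t_one]
    · rw [hred.2, Submodule.mem_bot] at hc
      simp [hc]

end Final

/-! ## Statement 6: `t`-equivalences versus quasi-isomorphisms -/

/-- For a 2-reduced cocommutative dg coalgebra `C`, every
`t`-equivalence of left dg `C`-comodules is a quasi-isomorphism; conversely, every
quasi-isomorphism between bounded below `C`-comodules is a `t`-equivalence. -/
theorem tEquiv_iff_quasiIso_of_boundedBelow (C : CoaugDGCoalgebra) (hred : C.TwoReduced)
    (hcc : C.toDGCoalgebra.Cocomm) (Ω : CobarData C)
    (N M : DGComodule C.toDGCoalgebra) (f : N.carrier →ₗ[ℚ] M.carrier)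
    (hf : IsComoduleHom C.toDGCoalgebra N M f) :
    (IsTEquiv C Ω N M f → IsQuasiIso N.d M.d f) ∧
    (N.toDGVect.BoundedBelow → M.toDGVect.BoundedBelow →
      IsQuasiIso N.d M.d f → IsTEquiv C Ω N M f) := by
  have htl := t_low C hred Ω
  have hd := coneD_sq N M f hf
  have hρ := coneRho_coassoc N M
  have hch := coneRho_chain N M f hf
  rw [quasiIso_iff_coneD N M f hf, IsTEquiv, ext_quasiIso_iff N M f Ω.t hf]
  refine ⟨fun h => ?_, ?_⟩
  · obtain ⟨aug, h1, h2, h3, h4, h5⟩ := exists_aug C Ω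
    exact acyclic_of_ext_acyclic Ω.t htl aug h1 h2 h3 h4 h5 (coneD N M f) hd (coneRho N M) hρ
      (coneRho_counit N M) hch h
  · rintro ⟨b, hb⟩ ⟨b', hb'⟩ h
    refine ext_acyclic Ω.t htl (coneGr N.grading M.grading) (min b b') ?_ (coneD N M f)
      (coneD_mem N M f hf) hd (coneRho N M) (coneRho_mem N M) hρ hch h
    intro n hn
    rw [lt_min_iff] at hn
    rw [coneGr, hb _ (by omega), hb' _ hn.2, Submodule.prod_bot]

end
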